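/- arXiv:2312.00217 — 11 statements merged into one kernel-verified Lean document; each statement's English description precedes it below -/
import Mathlib

section
/- Let α and β be positive integers and let Cs, Sn : ℝ → ℝ be differentiable functions satisfying Cs'(θ) = −Sn(θ)^(2α−1) and Sn'(θ) = Cs(θ)^(2β−1) for all θ ∈ ℝ, together with Cs(0) = 1 and Sn(0) = 0. Then for every θ ∈ ℝ one has β·Sn(θ)^(2α) + α·Cs(θ)^(2β) = α. -/
/-!
The system is Hamiltonian, with the separable energy
`H = Sn ^ (2 * α) / (2 * α) + Cs ^ (2 * β) / (2 * β)`, so `H` is constant along solutions, and the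
initial data give it the value `1 / (2 * β)`.
-/

section

variable {𝕜 : Type*} [RCLike 𝕜] {U : Set 𝕜}

theorem separable_hamiltonian_eq_of_hasDerivAt (hU : IsOpen U) (hUc : IsPreconnected U)
    {F G f g x y : 𝕜 → 𝕜}
    (hF : ∀ t ∈ U, HasDerivAt F (f (x t)) (x t)) (hG : ∀ t ∈ U, HasDerivAt G (g (y t)) (y t))
    (hx : ∀ t ∈ U, HasDerivAt x (-g (y t)) t) (hy : ∀ t ∈ U, HasDerivAt y (f (x t)) t)
    {s t : 𝕜} (hs : s ∈ U) (ht : t ∈ U) :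
    F (x s) + G (y s) = F (x t) + G (y t) := by
  have hasDerivAt_energy : ∀ r ∈ U, HasDerivAt (fun r ↦ F (x r) + G (y r)) 0 r := fun r hr ↦
    (((hF r hr).comp r (hx r hr)).add ((hG r hr).comp r (hy r hr))).congr_deriv (by ring)
  exact hU.is_const_of_deriv_eq_zero hUc
    (fun r hr ↦ (hasDerivAt_energy r hr).differentiableAt.differentiableWithinAt)
    (fun r hr ↦ (hasDerivAt_energy r hr).deriv) hs ht

theorem hasDerivAt_pow_succ_div (n : ℕ) (z : 𝕜) :
    HasDerivAt (fun w : 𝕜 ↦ w ^ (n + 1) / (n + 1)) (z ^ n) z := by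
  have hn : (n + 1 : 𝕜) ≠ 0 := Nat.cast_add_one_ne_zero n
  refine ((hasDerivAt_pow (n + 1) z).div_const (n + 1 : 𝕜)).congr_deriv ?_
  rw [Nat.cast_add_one, Nat.add_sub_cancel, mul_div_cancel_left₀ _ hn]

theorem stmt_0_general (hU : IsOpen U) (hUc : IsPreconnected U) (h0 : 0 ∈ U) (m n : ℕ)
    {Cs Sn : 𝕜 → 𝕜}
    (hCs : ∀ θ ∈ U, HasDerivAt Cs (-(Sn θ) ^ m) θ) (hSn : ∀ θ ∈ U, HasDerivAt Sn ((Cs θ) ^ n) θ)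
    (hCs0 : Cs 0 = 1) (hSn0 : Sn 0 = 0) {θ : 𝕜} (hθ : θ ∈ U) :
    (n + 1) * (Sn θ) ^ (m + 1) + (m + 1) * (Cs θ) ^ (n + 1) = (m + 1 : 𝕜) := by
  have hm : (m + 1 : 𝕜) ≠ 0 := Nat.cast_add_one_ne_zero m
  have hn : (n + 1 : 𝕜) ≠ 0 := Nat.cast_add_one_ne_zero n
  have energy_eq : (Cs θ) ^ (n + 1) / (n + 1) + (Sn θ) ^ (m + 1) / (m + 1)
      = (Cs 0) ^ (n + 1) / (n + 1) + (Sn 0) ^ (m + 1) / (m + 1) :=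
    separable_hamiltonian_eq_of_hasDerivAt hU hUc (f := (· ^ n)) (g := (· ^ m))
      (fun _ _ ↦ hasDerivAt_pow_succ_div n _) (fun _ _ ↦ hasDerivAt_pow_succ_div m _)
      hCs hSn hθ h0
  rw [hCs0, hSn0, one_pow, zero_pow m.succ_ne_zero, zero_div, add_zero] at energy_eq
  field_simp at energy_eq
  linear_combination energy_eq

end

/-- If `Cs`, `Sn` solve the Cauchy problem
`Cs' = -Sn^(2α-1)`, `Sn' = Cs^(2β-1)`, `Cs 0 = 1`, `Sn 0 = 0`
(with `α, β` positive integers), then `β·Sn^(2α) + α·Cs^(2β) = α` everywhere. -/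
theorem stmt_0 (α β : ℕ) (hα : 0 < α) (hβ : 0 < β) (Cs Sn : ℝ → ℝ)
    (hCs : ∀ θ : ℝ, HasDerivAt Cs (-(Sn θ) ^ (2 * α - 1)) θ)
    (hSn : ∀ θ : ℝ, HasDerivAt Sn ((Cs θ) ^ (2 * β - 1)) θ)
    (hCs0 : Cs 0 = 1) (hSn0 : Sn 0 = 0) :
    ∀ θ : ℝ, (β : ℝ) * (Sn θ) ^ (2 * α) + (α : ℝ) * (Cs θ) ^ (2 * β) = (α : ℝ) := by
  intro θ
  have doubled := stmt_0_general isOpen_univ isPreconnected_univ (Set.mem_univ 0)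
    (2 * α - 1) (2 * β - 1) (fun θ _ ↦ hCs θ) (fun θ _ ↦ hSn θ) hCs0 hSn0 (Set.mem_univ θ)
  rw [← Nat.cast_add_one, ← Nat.cast_add_one, Nat.sub_add_cancel (by lia),
    Nat.sub_add_cancel (by lia)] at doubled
  push_cast at doubled
  linear_combination doubled / 2
end

section
/- Let α and β be positive integers. There exists exactly one pair of differentiable functions Cs, Sn : ℝ → ℝ satisfying Cs'(θ) = −Sn(θ)^(2α−1), Sn'(θ) = Cs(θ)^(2β−1) for all θ ∈ ℝ, with Cs(0) = 1 and Sn(0) = 0; moreover, both Cs and Sn are real-analytic functions on ℝ. -/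
/-!
The energy `β Sn^(2α) + α Cs^(2β)` is a first integral with bounded level sets. Multiplying the
field by a bump function equal to `1` on the level set of the initial value makes it compactly
supported, hence complete, and keeps the energy conserved; so the curve of the truncated field never
leaves the level set, where the truncation is invisible, and is a global solution. Uniqueness holds
because the field is `C¹`.

For analyticity, let `γ` be an integral curve of a field `v` analytic at `γ t₀`. The arc
`f τ = γ (t₀ + τ (t - t₀))`, `τ ∈ [0, 1]`, solves `f = γ t₀ + (t - t₀) ∫₀ v ∘ f`, an equation in
`ℝ × C([0, 1], E)` that is analytic because superposition with `v` is, and whose partial derivative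
in `f` at `t = t₀` is the identity. By the analytic implicit function theorem `f` depends
analytically on `t`, hence so does `γ t = f 1`.
-/

open Filter Metric Set Topology
open scoped ContDiff

section Superposition

variable {𝕜 K E F : Type*} [NontriviallyNormedField 𝕜] [TopologicalSpace K] [CompactSpace K]
  [NormedAddCommGroup E] [NormedSpace 𝕜 E] [NormedAddCommGroup F] [NormedSpace 𝕜 F]

/-- The continuous multilinear map `(f₁, …, fₙ) ↦ (k ↦ m (f₁ k, …, fₙ k))` obtained by applying `m`
pointwise to continuous maps on a compact space. -/
noncomputable def superpositionMultilinear (K : Type*) [TopologicalSpace K] [CompactSpace K] {n : ℕ}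
    (m : E [×n]→L[𝕜] F) : C(K, E) [×n]→L[𝕜] C(K, F) :=
  MultilinearMap.mkContinuous
    { toFun := fun f => ⟨fun k => m fun i => f i k, by fun_prop⟩
      map_update_add' := fun f i g h => by
        ext k
        exact (m.compContinuousLinearMap fun _ => ContinuousMap.evalCLM 𝕜 k).map_update_add f i g h
      map_update_smul' := fun f i c g => by
        ext k
        exact
          (m.compContinuousLinearMap fun _ => ContinuousMap.evalCLM 𝕜 k).map_update_smul f i c g }
    ‖m‖ fun f => by
      rw [ContinuousMap.norm_le _ (by positivity)]
      exact fun k => m.le_opNorm_mul_prod_of_le fun i => (f i).norm_coe_le_norm k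

theorem norm_superpositionMultilinear_le {n : ℕ} (m : E [×n]→L[𝕜] F) :
    ‖superpositionMultilinear K m‖ ≤ ‖m‖ :=
  MultilinearMap.mkContinuous_norm_le _ (norm_nonneg m) _

/-- The formal multilinear series that `p` induces on continuous maps, term by term and pointwise.
If `p` represents `g` near `x`, it represents the superposition operator `f ↦ g ∘ f` near the
constant map `x`. -/
noncomputable def superpositionSeries (K : Type*) [TopologicalSpace K] [CompactSpace K]
    (p : FormalMultilinearSeries 𝕜 E F) : FormalMultilinearSeries 𝕜 C(K, E) C(K, F) :=
  fun n => superpositionMultilinear K (p n)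

theorem radius_le_radius_superpositionSeries (p : FormalMultilinearSeries 𝕜 E F) :
    p.radius ≤ (superpositionSeries K p).radius := by
  refine ENNReal.le_of_forall_nnreal_lt fun r hr => ?_
  obtain ⟨C, -, hC⟩ := p.norm_mul_pow_le_of_lt_radius hr
  refine (superpositionSeries K p).le_radius_of_bound C fun n => ?_
  exact (mul_le_mul_of_nonneg_right (norm_superpositionMultilinear_le (p n)) (by positivity)).trans
    (hC n)

theorem exists_analyticAt_superposition [CompleteSpace F] {g : E → F} {x : E}
    (hg : AnalyticAt 𝕜 g x) :
    ∃ G : C(K, E) → C(K, F), AnalyticAt 𝕜 G (.const K x) ∧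
      ∀ᶠ f in 𝓝 (ContinuousMap.const K x), ∀ k, G f k = g (f k) := by
  obtain ⟨p, r, hp⟩ := hg
  have hradius : r ≤ (superpositionSeries K p).radius :=
    hp.r_le.trans (radius_le_radius_superpositionSeries p)
  have hG : HasFPowerSeriesOnBall (fun f => (superpositionSeries K p).sum (f - .const K x))
      (superpositionSeries K p) (.const K x) r := by
    simpa only [zero_add] using
      (((superpositionSeries K p).hasFPowerSeriesOnBall (hp.r_pos.trans_le hradius)).mono
        hp.r_pos hradius).comp_sub (.const K x)
  refine ⟨_, hG.analyticAt, ?_⟩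
  filter_upwards [eball_mem_nhds _ hp.r_pos] with f hf k
  have hfk : f k ∈ eball x r := by
    rw [mem_eball, ContinuousMap.edist_eq_iSup] at hf
    exact (le_iSup (fun k => edist (f k) x) k).trans_lt hf
  exact ((hG.hasSum_sub hf).mapL (ContinuousMap.evalCLM 𝕜 k)).unique (hp.hasSum_sub hfk)

end Superposition

section UnitInterval

open scoped unitInterval

section RescaledArc

variable {X : Type*} [TopologicalSpace X]

/-- The arc of `γ` from time `t₀` to time `t`, affinely reparametrized by `[0, 1]`. -/
def rescaledArc (γ : C(ℝ, X)) (t₀ t : ℝ) : C(I, X) :=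
  γ.comp ⟨fun τ => t₀ + τ * (t - t₀), by fun_prop⟩

theorem rescaledArc_self (γ : C(ℝ, X)) (t₀ : ℝ) : rescaledArc γ t₀ t₀ = .const I (γ t₀) := by
  ext τ
  simp [rescaledArc]

theorem rescaledArc_one (γ : C(ℝ, X)) (t₀ t : ℝ) : rescaledArc γ t₀ t 1 = γ t := by
  simp [rescaledArc]

theorem continuous_rescaledArc (γ : C(ℝ, X)) (t₀ : ℝ) : Continuous (rescaledArc γ t₀) :=
  ContinuousMap.continuous_of_continuous_uncurry _ (by
    simp only [rescaledArc, Function.uncurry_def, ContinuousMap.comp_apply, ContinuousMap.coe_mk]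
    fun_prop)

theorem exists_continuousMap_eventuallyEq {γ : ℝ → X} {t₀ : ℝ}
    (hγ : ∀ᶠ t in 𝓝 t₀, ContinuousAt γ t) : ∃ γ' : C(ℝ, X), γ' =ᶠ[𝓝 t₀] γ := by
  obtain ⟨δ, hδ, hball⟩ := nhds_basis_closedBall.eventually_iff.1 hγ
  rw [Real.closedBall_eq_Icc] at hball
  have hle : t₀ - δ ≤ t₀ + δ := by linarith
  have hcont : ContinuousOn γ (Icc (t₀ - δ) (t₀ + δ)) := fun t ht => (hball ht).continuousWithinAt
  refine
    ⟨⟨IccExtend hle ((Icc (t₀ - δ) (t₀ + δ)).domRestrict γ), hcont.domRestrict.Icc_extend'⟩, ?_⟩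
  filter_upwards [Icc_mem_nhds (sub_lt_self t₀ hδ) (lt_add_of_pos_right t₀ hδ)] with t ht
  exact IccExtend_of_mem hle ((Icc (t₀ - δ) (t₀ + δ)).domRestrict γ) ht

end RescaledArc

section Analyticity

variable {E : Type*} [NormedAddCommGroup E] [NormedSpace ℝ E]

/-- The bounded operator taking `f ∈ C([0, 1], E)` to its primitive vanishing at `0`. The integrand
is the constant extension of `f` to `ℝ`. -/
noncomputable def primitiveCLM (E : Type*) [NormedAddCommGroup E] [NormedSpace ℝ E] :
    C(I, E) →L[ℝ] C(I, E) :=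
  LinearMap.mkContinuous
    { toFun := fun f =>
        ⟨fun τ => ∫ s in (0 : ℝ)..τ, IccExtend zero_le_one f s,
          (intervalIntegral.continuous_primitive
            (fun a b => f.continuous.Icc_extend'.intervalIntegrable a b) 0).comp
              continuous_subtype_val⟩
      map_add' := fun f g => by
        ext τ
        exact intervalIntegral.integral_add (f.continuous.Icc_extend'.intervalIntegrable _ _)
          (g.continuous.Icc_extend'.intervalIntegrable _ _)
      map_smul' := fun c f => by
        ext τ
        exact intervalIntegral.integral_smul c _ }
    1 fun f => by
      rw [one_mul, ContinuousMap.norm_le _ (norm_nonneg f)]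
      intro τ
      refine (intervalIntegral.norm_integral_le_of_norm_le_const
        fun s _ => f.norm_coe_le_norm (projIcc 0 1 zero_le_one s)).trans ?_
      rw [sub_zero, abs_of_nonneg τ.2.1]
      exact mul_le_of_le_one_right (norm_nonneg f) τ.2.2

theorem primitiveCLM_apply (f : C(I, E)) (τ : I) :
    primitiveCLM E f τ = ∫ s in (0 : ℝ)..τ, IccExtend zero_le_one f s :=
  rfl

/-- The failure of `f` to solve `f τ = x + (t - t₀) ∫₀^τ G f` on `[0, 1]`, as a function of
`u = (t, f)`. When `G` is superposition with a vector field `v`, it vanishes if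
`f τ = γ (t₀ + τ (t - t₀))` for an integral curve `γ` of `v` with `γ t₀ = x`. -/
noncomputable def picardDefect (G : C(I, E) → C(I, E)) (t₀ : ℝ) (x : E) (u : ℝ × C(I, E)) :
    C(I, E) :=
  u.2 - .const I x - (u.1 - t₀) • primitiveCLM E (G u.2)

theorem picardDefect_self_right (G : C(I, E) → C(I, E)) (t₀ : ℝ) (x : E) (f : C(I, E)) :
    picardDefect G t₀ x (t₀, f) = f - .const I x := by
  simp [picardDefect]

theorem analyticAt_picardDefect {G : C(I, E) → C(I, E)} {f : C(I, E)} (hG : AnalyticAt ℝ G f)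
    (t₀ t : ℝ) (x : E) : AnalyticAt ℝ (picardDefect G t₀ x) (t, f) := by
  have hGsnd : AnalyticAt ℝ (fun u : ℝ × C(I, E) => G u.2) (t, f) :=
    hG.comp (f := Prod.snd) analyticAt_snd
  exact (analyticAt_snd.sub analyticAt_const).sub ((analyticAt_fst.sub analyticAt_const).smul
    (((primitiveCLM E).analyticAt _).comp hGsnd))

theorem fderiv_picardDefect_comp_inr {G : C(I, E) → C(I, E)} {f : C(I, E)} {t₀ : ℝ} {x : E}
    (hG : DifferentiableAt ℝ (picardDefect G t₀ x) (t₀, f)) :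
    fderiv ℝ (picardDefect G t₀ x) (t₀, f) ∘L .inr ℝ ℝ C(I, E) = .id ℝ C(I, E) := by
  have hcomp := hG.hasFDerivAt.comp f (hasFDerivAt_prodMk_right t₀ f)
  rw [show picardDefect G t₀ x ∘ Prod.mk t₀ = fun h => h - .const I x from
    funext (picardDefect_self_right G t₀ x)] at hcomp
  exact hcomp.unique ((hasFDerivAt_id f).sub_const _)

theorem picardDefect_rescaledArc_eq_zero [CompleteSpace E] {v : E → E} {G : C(I, E) → C(I, E)}
    {γ : C(ℝ, E)} {U : Set ℝ} {t₀ t : ℝ} (hU : Convex ℝ U) (ht₀ : t₀ ∈ U) (ht : t ∈ U)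
    (hγ : ∀ s ∈ U, HasDerivAt γ (v (γ s)) s)
    (hG : ∀ τ, G (rescaledArc γ t₀ t) τ = v (rescaledArc γ t₀ t τ)) :
    picardDefect G t₀ (γ t₀) (t, rescaledArc γ t₀ t) = 0 := by
  ext τ
  have hderiv : ∀ s ∈ uIcc (0 : ℝ) τ, HasDerivAt (fun s => γ (t₀ + s * (t - t₀)))
      ((t - t₀) • IccExtend zero_le_one (G (rescaledArc γ t₀ t)) s) s := by
    intro s hs
    rw [uIcc_of_le τ.2.1] at hs
    have hsI : s ∈ I := ⟨hs.1, hs.2.trans τ.2.2⟩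
    rw [IccExtend_of_mem _ _ hsI, hG]
    have haffine : HasDerivAt (fun s => t₀ + s * (t - t₀)) (t - t₀) s := by
      simpa using ((hasDerivAt_id s).mul_const (t - t₀)).const_add t₀
    exact (hγ _ (hU.add_smul_sub_mem ht₀ ht hsI)).scomp s haffine
  have hintegral := intervalIntegral.integral_eq_sub_of_hasDerivAt hderiv
    (((G (rescaledArc γ t₀ t)).continuous.Icc_extend'.const_smul _).intervalIntegrable _ _)
  rw [intervalIntegral.integral_smul, zero_mul, add_zero] at hintegral
  simp only [picardDefect, ContinuousMap.sub_apply, ContinuousMap.smul_apply,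
    ContinuousMap.const_apply, ContinuousMap.zero_apply, primitiveCLM_apply, hintegral]
  exact sub_self _

theorem analyticAt_of_isIntegralCurveAt [CompleteSpace E] {v : E → E} {γ : ℝ → E} {t₀ : ℝ}
    (hγ : IsIntegralCurveAt γ (fun _ => v) t₀) (hv : AnalyticAt ℝ v (γ t₀)) :
    AnalyticAt ℝ γ t₀ := by
  obtain ⟨γ', hγ'⟩ := exists_continuousMap_eventuallyEq (hγ.mono fun t ht => ht.continuousAt)
  suffices AnalyticAt ℝ γ' t₀ from this.congr hγ'
  have hcurve : ∀ᶠ t in 𝓝 t₀, HasDerivAt γ' (v (γ' t)) t := by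
    filter_upwards [hγ, hγ'.eventuallyEq_nhds] with t ht heq
    rw [heq.self_of_nhds]
    exact ht.congr_of_eventuallyEq heq
  obtain ⟨δ, hδ, hball⟩ := eventually_nhds_iff_ball.1 hcurve
  rw [← hγ'.self_of_nhds] at hv
  obtain ⟨G, hG, hGv⟩ := exists_analyticAt_superposition (K := I) hv
  have harc : Tendsto (rescaledArc γ' t₀) (𝓝 t₀) (𝓝 (.const I (γ' t₀))) :=
    rescaledArc_self γ' t₀ ▸ (continuous_rescaledArc γ' t₀).tendsto t₀
  have hdefect : ContDiffAt ℝ ω (picardDefect G t₀ (γ' t₀)) (t₀, .const I (γ' t₀)) :=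
    (analyticAt_picardDefect hG t₀ t₀ (γ' t₀)).contDiffAt
  have hω : (ω : WithTop ℕ∞) ≠ 0 := by simp
  have hinv := fderiv_picardDefect_comp_inr (hdefect.differentiableAt hω)
  have hinv' : (fderiv ℝ (picardDefect G t₀ (γ' t₀)) (t₀, .const I (γ' t₀)) ∘L
      .inr ℝ ℝ C(I, E)).IsInvertible := hinv ▸ ⟨.refl ℝ _, rfl⟩
  have hψ := (hdefect.contDiffAt_implicitFunction hω hinv').analyticAt
  refine (((ContinuousMap.evalCLM ℝ (1 : I)).analyticAt _).comp hψ).congr ?_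
  filter_upwards [ball_mem_nhds t₀ hδ, harc.eventually hGv, (tendsto_id.prodMk_nhds harc).eventually
    (hdefect.eventually_apply_eq_iff_implicitFunction hω hinv')] with t ht htG htψ
  have hzero : picardDefect G t₀ (γ' t₀) (t, rescaledArc γ' t₀ t) =
      picardDefect G t₀ (γ' t₀) (t₀, .const I (γ' t₀)) := by
    rw [picardDefect_rescaledArc_eq_zero (convex_ball t₀ δ) (mem_ball_self hδ) ht hball htG,
      picardDefect_self_right, sub_self]
  exact (congrArg (fun f : C(I, E) => f 1) (htψ.1 hzero)).trans (rescaledArc_one γ' t₀ t)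

end Analyticity

end UnitInterval

section Existence

open scoped Manifold

variable {E : Type*} [NormedAddCommGroup E] [NormedSpace ℝ E]

theorem isMIntegralCurveOn_iff_isIntegralCurveOn {γ : ℝ → E} {v : E → E} {s : Set ℝ} :
    IsMIntegralCurveOn (I := 𝓘(ℝ, E)) γ v s ↔ IsIntegralCurveOn γ (fun _ => v) s :=
  forall₂_congr fun _ _ => hasMFDerivWithinAt_iff_hasFDerivWithinAt

theorem isMIntegralCurve_iff_isIntegralCurve {γ : ℝ → E} {v : E → E} :
    IsMIntegralCurve (I := 𝓘(ℝ, E)) γ v ↔ IsIntegralCurve γ (fun _ => v) :=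
  forall_congr' fun _ => hasMFDerivAt_iff_hasFDerivAt

theorem eq_of_isIntegralCurve_of_contDiff [CompleteSpace E] {v : E → E} (hv : ContDiff ℝ 1 v)
    {γ γ' : ℝ → E} {t₀ : ℝ} (hγ : IsIntegralCurve γ fun _ => v)
    (hγ' : IsIntegralCurve γ' fun _ => v) (h : γ t₀ = γ' t₀) : γ = γ' :=
  isMIntegralCurve_Ioo_eq_of_contMDiff_boundaryless (I := 𝓘(ℝ, E)) (v := v)
    (contMDiff_vectorSpace_iff_contDiff.2 hv)
    (isMIntegralCurve_iff_isIntegralCurve.2 hγ) (isMIntegralCurve_iff_isIntegralCurve.2 hγ') h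

theorem exists_isIntegralCurve_of_hasCompactSupport [CompleteSpace E] {v : E → E}
    (hv : ContDiff ℝ 1 v) (hsupp : HasCompactSupport v) (x : E) :
    ∃ γ : ℝ → E, γ 0 = x ∧ IsIntegralCurve γ fun _ => v := by
  obtain ⟨K, hK⟩ := hv.lipschitzWith_of_hasCompactSupport hsupp one_ne_zero
  obtain ⟨C, hC⟩ := hsupp.exists_bound_of_continuous hv.continuous
  suffices ∃ γ : ℝ → E, γ 0 = x ∧ IsMIntegralCurve (I := 𝓘(ℝ, E)) γ v by
    simpa only [isMIntegralCurve_iff_isIntegralCurve] using this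
  rw [exists_isMIntegralCurve_iff_exists_isMIntegralCurveOn_Ioo (I := 𝓘(ℝ, E)) (v := v)
    (contMDiff_vectorSpace_iff_contDiff.2 hv)]
  intro a
  have hpicard : IsPicardLindelof (fun _ => v) (tmin := -|a|) (tmax := |a|)
      ⟨0, by simp⟩ x (C.toNNReal * ‖a‖₊) 0 C.toNNReal K :=
    { lipschitzOnWith := fun _ _ => hK.lipschitzOnWith
      continuousOn := fun _ _ => continuousOn_const
      norm_le := fun _ _ y _ => (hC y).trans (Real.le_coe_toNNReal C)
      mul_max_le := by simp }
  obtain ⟨γ, hγ0, hγ⟩ := hpicard.exists_eq_forall_mem_Icc_hasDerivWithinAt₀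
  refine ⟨γ, hγ0, isMIntegralCurveOn_iff_isIntegralCurveOn.2 ?_⟩
  have hsub : Ioo (-a) a ⊆ Icc (-|a|) |a| := fun t ht =>
    abs_le.1 ((abs_lt.2 ht).le.trans (le_abs_self a))
  exact IsIntegralCurveOn.mono hγ hsub

/-- `H` is a first integral of the vector field `v`: a differentiable function whose derivative
along `v` vanishes identically. -/
structure IsFirstIntegral (H : E → ℝ) (v : E → E) : Prop where
  differentiable : Differentiable ℝ H
  fderiv_apply_eq_zero : ∀ x, fderiv ℝ H x (v x) = 0

namespace IsFirstIntegral

variable {H : E → ℝ} {v : E → E}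

theorem smul (hH : IsFirstIntegral H v) (χ : E → ℝ) : IsFirstIntegral H fun x => χ x • v x where
  differentiable := hH.differentiable
  fderiv_apply_eq_zero x := by rw [map_smul, hH.fderiv_apply_eq_zero, smul_zero]

theorem apply_eq (hH : IsFirstIntegral H v) {γ : ℝ → E} (hγ : IsIntegralCurve γ fun _ => v)
    (s t : ℝ) : H (γ s) = H (γ t) := by
  have hderiv (r : ℝ) : HasDerivAt (H ∘ γ) 0 r := by
    simpa only [hH.fderiv_apply_eq_zero] using
      (hH.differentiable (γ r)).hasFDerivAt.comp_hasDerivAt r (hγ r)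
  exact is_const_of_deriv_eq_zero (fun r => (hderiv r).differentiableAt)
    (fun r => (hderiv r).deriv) s t

theorem exists_isIntegralCurve [FiniteDimensional ℝ E] (hH : IsFirstIntegral H v)
    (hv : ContDiff ℝ 1 v) {x : E} (hx : Bornology.IsBounded {y | H y = H x}) :
    ∃ γ : ℝ → E, γ 0 = x ∧ IsIntegralCurve γ fun _ => v := by
  have : CompleteSpace E := FiniteDimensional.complete ℝ E
  obtain ⟨R, hR, hlevel⟩ := hx.subset_closedBall_lt 0 0
  let χ : ContDiffBump (0 : E) := ⟨R, R + 1, hR, lt_add_one R⟩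
  have hχlevel {y : E} (hy : H y = H x) : χ y = 1 := χ.one_of_mem_closedBall (hlevel hy)
  obtain ⟨γ, hγ0, hγ⟩ := exists_isIntegralCurve_of_hasCompactSupport (χ.contDiff.smul hv)
    (χ.hasCompactSupport.smul_right (f' := v)) x
  refine ⟨γ, hγ0, fun t => ?_⟩
  have ht : H (γ t) = H x := hγ0 ▸ (hH.smul χ).apply_eq hγ t 0
  simpa only [Pi.smul_apply', hχlevel ht, one_smul] using hγ t

theorem existsUnique_isIntegralCurve [FiniteDimensional ℝ E] (hH : IsFirstIntegral H v)
    (hv : ContDiff ℝ 1 v) {x : E} (hx : Bornology.IsBounded {y | H y = H x}) :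
    ∃! γ : ℝ → E, γ 0 = x ∧ IsIntegralCurve γ fun _ => v := by
  have : CompleteSpace E := FiniteDimensional.complete ℝ E
  obtain ⟨γ, hγ0, hγ⟩ := hH.exists_isIntegralCurve hv hx
  exact ⟨γ, ⟨hγ0, hγ⟩, fun γ' ⟨hγ'0, hγ'⟩ =>
    eq_of_isIntegralCurve_of_contDiff hv hγ' hγ (hγ'0.trans hγ0.symm)⟩

end IsFirstIntegral

end Existence

section GeneralizedTrigonometry

/-- The planar vector field whose integral curve through `(1, 0)` is `(Cs, Sn)`. -/
def trigField (α β : ℕ) (p : ℝ × ℝ) : ℝ × ℝ :=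
  (-p.2 ^ (2 * α - 1), p.1 ^ (2 * β - 1))

/-- The first integral `β Sn^(2α) + α Cs^(2β)` of the system, with `p = (Cs, Sn)`. -/
def trigEnergy (α β : ℕ) (p : ℝ × ℝ) : ℝ :=
  β * p.2 ^ (2 * α) + α * p.1 ^ (2 * β)

variable {α β : ℕ}

theorem analyticAt_trigField (p : ℝ × ℝ) : AnalyticAt ℝ (trigField α β) p :=
  (analyticAt_snd.pow _).neg.prod (analyticAt_fst.pow _)

theorem contDiff_trigField : ContDiff ℝ 1 (trigField α β) :=
  (contDiff_snd.pow _).neg.prodMk (contDiff_fst.pow _)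

theorem isFirstIntegral_trigEnergy : IsFirstIntegral (trigEnergy α β) (trigField α β) := by
  have hderiv (p : ℝ × ℝ) : HasFDerivAt (trigEnergy α β) _ p :=
    (((hasFDerivAt_snd (𝕜 := ℝ)).pow (2 * α)).const_mul (β : ℝ)).add
      (((hasFDerivAt_fst (𝕜 := ℝ)).pow (2 * β)).const_mul (α : ℝ))
  refine ⟨fun p => (hderiv p).differentiableAt, fun p => ?_⟩
  rw [(hderiv p).fderiv]
  simp only [nsmul_eq_mul, Nat.cast_mul, Nat.cast_ofNat, trigField, add_apply, smul_apply,
    ContinuousLinearMap.coe_snd', smul_eq_mul, ContinuousLinearMap.coe_fst', mul_neg]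
  ring

theorem abs_le_max_one_of_natCast_mul_pow_le {x c : ℝ} {m n : ℕ} (hm : 0 < m) (hn : 0 < n)
    (h : m * x ^ (2 * n) ≤ c) : |x| ≤ max 1 c := by
  rcases le_total |x| 1 with hx | hx
  · exact hx.trans (le_max_left 1 c)
  · refine le_max_of_le_right ?_
    calc |x| ≤ |x| ^ (2 * n) := le_self_pow₀ hx (by positivity)
      _ = x ^ (2 * n) := (even_two_mul n).pow_abs x
      _ ≤ m * x ^ (2 * n) :=
        le_mul_of_one_le_left ((even_two_mul n).pow_nonneg x) (mod_cast hm)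
      _ ≤ c := h

theorem isBounded_trigEnergy_level (hα : 0 < α) (hβ : 0 < β) (c : ℝ) :
    Bornology.IsBounded {p | trigEnergy α β p = c} := by
  refine isBounded_iff_forall_norm_le.2 ⟨max 1 c, fun p hp => max_le ?_ ?_⟩
  · refine abs_le_max_one_of_natCast_mul_pow_le hα hβ (hp ▸ ?_)
    exact le_add_of_nonneg_left (mul_nonneg β.cast_nonneg ((even_two_mul α).pow_nonneg p.2))
  · refine abs_le_max_one_of_natCast_mul_pow_le hβ hα (hp ▸ ?_)
    exact le_add_of_nonneg_right (mul_nonneg α.cast_nonneg ((even_two_mul β).pow_nonneg p.1))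

theorem isIntegralCurve_trigField_iff {γ : ℝ → ℝ × ℝ} :
    IsIntegralCurve γ (fun _ => trigField α β) ↔
      (∀ t, HasDerivAt (fun s => (γ s).1) (-(γ t).2 ^ (2 * α - 1)) t) ∧
        ∀ t, HasDerivAt (fun s => (γ s).2) ((γ t).1 ^ (2 * β - 1)) t :=
  ⟨fun h => ⟨fun t => (h t).fst, fun t => (h t).snd⟩, fun h t => (h.1 t).prodMk (h.2 t)⟩

end GeneralizedTrigonometry

/-- For positive integers `α, β`, there is exactly one pair of
(everywhere differentiable) functions `Cs, Sn : ℝ → ℝ` with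
`Cs' = -Sn^(2α-1)`, `Sn' = Cs^(2β-1)`, `Cs 0 = 1`, `Sn 0 = 0`;
moreover any such pair consists of real-analytic functions. -/
theorem stmt_1 (α β : ℕ) (hα : 0 < α) (hβ : 0 < β) :
    (∃! p : (ℝ → ℝ) × (ℝ → ℝ),
      (∀ θ : ℝ, HasDerivAt p.1 (-(p.2 θ) ^ (2 * α - 1)) θ) ∧
      (∀ θ : ℝ, HasDerivAt p.2 ((p.1 θ) ^ (2 * β - 1)) θ) ∧
      p.1 0 = 1 ∧ p.2 0 = 0) ∧
    (∀ Cs Sn : ℝ → ℝ,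
      (∀ θ : ℝ, HasDerivAt Cs (-(Sn θ) ^ (2 * α - 1)) θ) →
      (∀ θ : ℝ, HasDerivAt Sn ((Cs θ) ^ (2 * β - 1)) θ) →
      Cs 0 = 1 → Sn 0 = 0 →
      (∀ θ : ℝ, AnalyticAt ℝ Cs θ) ∧ (∀ θ : ℝ, AnalyticAt ℝ Sn θ)) := by
  constructor
  · obtain ⟨γ, ⟨hγ0, hγ⟩, hunique⟩ := isFirstIntegral_trigEnergy.existsUnique_isIntegralCurve
      contDiff_trigField (isBounded_trigEnergy_level hα hβ (trigEnergy α β (1, 0)))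
    obtain ⟨hCs, hSn⟩ := isIntegralCurve_trigField_iff.1 hγ
    refine ⟨(fun θ => (γ θ).1, fun θ => (γ θ).2), ⟨hCs, hSn, by simp [hγ0], by simp [hγ0]⟩, ?_⟩
    rintro ⟨Cs, Sn⟩ ⟨hCs, hSn, hCs0, hSn0⟩
    rw [← hunique (fun θ => (Cs θ, Sn θ))
      ⟨Prod.ext hCs0 hSn0, isIntegralCurve_trigField_iff.2 ⟨hCs, hSn⟩⟩]
  · intro Cs Sn hCs hSn _ _
    have hcurve : IsIntegralCurve (fun θ => (Cs θ, Sn θ)) fun _ => trigField α β :=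
      isIntegralCurve_trigField_iff.2 ⟨hCs, hSn⟩
    have hanalytic (θ : ℝ) : AnalyticAt ℝ (fun θ => (Cs θ, Sn θ)) θ :=
      analyticAt_of_isIntegralCurveAt (hcurve.isIntegralCurveAt θ) (analyticAt_trigField _)
    exact ⟨fun θ => analyticAt_fst.comp (hanalytic θ), fun θ => analyticAt_snd.comp (hanalytic θ)⟩
end

section
/- Let α and β be positive integers and let (Cs, Sn) : ℝ → ℝ × ℝ be the unique global solution of the Cauchy problem Cs' = −Sn^(2α−1), Sn' = Cs^(2β−1), Cs(0) = 1, Sn(0) = 0. Set T = (2·α^((1−2α)/(2α)) / β^(1/(2α))) · ∫₀¹ (1−t)^((1−2α)/(2α)) · t^((1−2β)/(2β)) dt (a convergent improper integral, since both exponents are strictly greater than −1). Then T > 0 and both Cs and Sn are T-periodic: Cs(θ + T) = Cs(θ) and Sn(θ + T) = Sn(θ) for all θ ∈ ℝ. -/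
/-!
The system is Hamiltonian, with energy identity `α Cs ^ (2β) + β Sn ^ (2α) = α`. While `Cs` is
positive, `Sn` increases, so `Cs` eventually decreases at least linearly and reaches a first zero
`τ`. As both exponents are odd, the system is reversible under `(x, y) ↦ (x, -y)` and under
`(x, y) ↦ (-x, y)`; by uniqueness of solutions, `(Cs, Sn)` is invariant under the first reversal
about time `0` and the second about time `τ`. Composing the two shows that `2τ` is an antiperiod,
hence `4τ` a period. Finally `u = Cs ^ (2β)` decreases from `1` to `0` on `[0, τ]` and, by
conservation of energy, solves a separable first-order equation there; separating variables turns
`τ` into the Beta-type integral.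
-/

open Set Function

/-- Hamilton's equations `x' = -f(y)`, `y' = g(x)` for the separable Hamiltonian
`H(x, y) = G(x) + F(y)` with `F' = f` and `G' = g`; thus `y` is the position and `x` the momentum.
The functions `Cs` and `Sn` are the case `f(s) = s ^ (2α - 1)`, `g(s) = s ^ (2β - 1)`. -/
structure IsSeparableHamiltonianSolution (f g x y : ℝ → ℝ) : Prop where
  hasDerivAt_fst : ∀ t, HasDerivAt x (-f (y t)) t
  hasDerivAt_snd : ∀ t, HasDerivAt y (g (x t)) t

theorem eq_of_hasDerivAt_of_contDiff {E : Type*} [NormedAddCommGroup E] [NormedSpace ℝ E]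
    {v : E → E} (hv : ContDiff ℝ 1 v) {γ δ : ℝ → E} (hγ : ∀ t, HasDerivAt γ (v (γ t)) t)
    (hδ : ∀ t, HasDerivAt δ (v (δ t)) t) {t₀ : ℝ} (h₀ : γ t₀ = δ t₀) : γ = δ :=
  isMIntegralCurve_Ioo_eq_of_contMDiff_boundaryless (contMDiff_vectorSpace_iff_contDiff.2 hv)
    (fun t ↦ (hγ t).hasFDerivAt.hasMFDerivAt) (fun t ↦ (hδ t).hasFDerivAt.hasMFDerivAt) h₀

theorem exists_first_zero {h : ℝ → ℝ} {a b : ℝ} (hc : ContinuousOn h (Icc a b)) (hab : a ≤ b)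
    (ha : 0 < h a) (hb : h b ≤ 0) : ∃ c ∈ Ioc a b, h c = 0 ∧ ∀ t ∈ Ico a c, 0 < h t := by
  have hclosed : IsClosed (Icc a b ∩ h ⁻¹' Iic 0) :=
    hc.preimage_isClosed_of_isClosed isClosed_Icc isClosed_Iic
  obtain ⟨c, ⟨hc_mem, hc_nonpos⟩, hc_least⟩ := (isCompact_Icc.of_isClosed_subset hclosed
    inter_subset_left).exists_isLeast ⟨b, right_mem_Icc.2 hab, hb⟩
  obtain ⟨z, hz, hz_zero⟩ := intermediate_value_Icc' hc_mem.1
    (hc.mono (Icc_subset_Icc_right hc_mem.2)) ⟨hc_nonpos, ha.le⟩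
  have hzc : z = c := le_antisymm hz.2 (hc_least ⟨⟨hz.1, hz.2.trans hc_mem.2⟩, hz_zero.le⟩)
  subst hzc
  have hne : a ≠ z := by
    rintro rfl
    exact ha.ne' hz_zero
  refine ⟨z, ⟨hz.1.lt_of_ne hne, hc_mem.2⟩, hz_zero, fun t ht ↦ ?_⟩
  by_contra! hnonpos
  exact ht.2.not_ge (hc_least ⟨⟨ht.1, ht.2.le.trans hc_mem.2⟩, hnonpos⟩)

theorem integral_eq_sub_of_hasDerivAt_neg_inv {φ u : ℝ → ℝ} {a b : ℝ}
    (huc : ContinuousOn u (uIcc a b)) (hu : ∀ t ∈ uIoo a b, HasDerivAt u (-(φ (u t))⁻¹) t)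
    (hφ : ∀ t ∈ uIoo a b, 0 < φ (u t)) : ∫ s in u b..u a, φ s = b - a := by
  have hsubst : ∫ t in a..b, φ (u t) * -(φ (u t))⁻¹ = ∫ s in u a..u b, φ s :=
    intervalIntegral.integral_comp_mul_deriv_of_deriv_nonpos huc hu fun t ht ↦
      neg_nonpos.2 (inv_nonneg.2 (hφ t ht).le)
  have hconst : ∫ t in a..b, φ (u t) * -(φ (u t))⁻¹ = ∫ _ in a..b, (-1 : ℝ) :=
    intervalIntegral.integral_congr_uIoo fun t ht ↦ by
      simp only [mul_neg, mul_inv_cancel₀ (hφ t ht).ne']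
  rw [intervalIntegral.integral_symm, ← hsubst, hconst, intervalIntegral.integral_const,
    smul_eq_mul, mul_neg_one, neg_neg]

theorem pow_rpow_one_sub_div {n : ℕ} (hn : n ≠ 0) {x : ℝ} (hx : 0 ≤ x) :
    (x ^ n) ^ ((1 - n) / n : ℝ) = (x ^ (n - 1))⁻¹ := by
  have hexp : (n : ℝ) * ((1 - n) / n) = -(n - 1 : ℕ) := by
    rw [Nat.cast_pred (Nat.pos_of_ne_zero hn)]
    field_simp
    ring
  rw [← Real.rpow_natCast_mul hx, hexp, Real.rpow_neg hx, Real.rpow_natCast]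

theorem rpow_div_rpow_add_one_mul_div_rpow {a b : ℝ} (ha : 0 < a) (hb : 0 < b) (p : ℝ) :
    a ^ p / b ^ (p + 1) * (b / a) ^ p = b⁻¹ := by
  rw [Real.div_rpow hb.le ha.le, Real.rpow_add_one hb.ne']
  field_simp

namespace IsSeparableHamiltonianSolution

variable {f g x y : ℝ → ℝ}

theorem continuous_fst (h : IsSeparableHamiltonianSolution f g x y) : Continuous x :=
  continuous_iff_continuousAt.2 fun t ↦ (h.hasDerivAt_fst t).continuousAt

theorem continuous_snd (h : IsSeparableHamiltonianSolution f g x y) : Continuous y :=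
  continuous_iff_continuousAt.2 fun t ↦ (h.hasDerivAt_snd t).continuousAt

theorem unique {x' y' : ℝ → ℝ} (hf : ContDiff ℝ 1 f) (hg : ContDiff ℝ 1 g)
    (h : IsSeparableHamiltonianSolution f g x y) (h' : IsSeparableHamiltonianSolution f g x' y')
    {t₀ : ℝ} (hx : x t₀ = x' t₀) (hy : y t₀ = y' t₀) : x = x' ∧ y = y' := by
  have hv : ContDiff ℝ 1 fun p : ℝ × ℝ ↦ (-f p.2, g p.1) :=
    (hf.comp contDiff_snd).neg.prodMk (hg.comp contDiff_fst)
  have heq : (fun t ↦ (x t, y t)) = fun t ↦ (x' t, y' t) :=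
    eq_of_hasDerivAt_of_contDiff hv
      (fun t ↦ (h.hasDerivAt_fst t).prodMk (h.hasDerivAt_snd t))
      (fun t ↦ (h'.hasDerivAt_fst t).prodMk (h'.hasDerivAt_snd t)) (Prod.ext hx hy)
  exact ⟨funext fun t ↦ congr_arg Prod.fst (congr_fun heq t),
    funext fun t ↦ congr_arg Prod.snd (congr_fun heq t)⟩

theorem energy_eq {F G : ℝ → ℝ} (h : IsSeparableHamiltonianSolution f g x y)
    (hF : ∀ s, HasDerivAt F (f s) s) (hG : ∀ s, HasDerivAt G (g s) s) (s t : ℝ) :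
    G (x s) + F (y s) = G (x t) + F (y t) := by
  have hderiv (t : ℝ) : HasDerivAt (fun t ↦ G (x t) + F (y t)) 0 t := by
    convert! ((hG (x t)).comp t (h.hasDerivAt_fst t)).add
      ((hF (y t)).comp t (h.hasDerivAt_snd t)) using 1
    ring
  exact is_const_of_deriv_eq_zero (fun t ↦ (hderiv t).differentiableAt)
    (fun t ↦ (hderiv t).deriv) s t

theorem reflect_snd (h : IsSeparableHamiltonianSolution f g x y) (hf : f.Odd) (c : ℝ) :
    IsSeparableHamiltonianSolution f g (fun t ↦ x (c - t)) (fun t ↦ -y (c - t)) where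
  hasDerivAt_fst t := by
    convert! (h.hasDerivAt_fst (c - t)).comp_const_sub c t using 1
    rw [hf]
  hasDerivAt_snd t := by
    convert! ((h.hasDerivAt_snd (c - t)).comp_const_sub c t).neg using 1
    rw [neg_neg]

theorem reflect_fst (h : IsSeparableHamiltonianSolution f g x y) (hg : g.Odd) (c : ℝ) :
    IsSeparableHamiltonianSolution f g (fun t ↦ -x (c - t)) (fun t ↦ y (c - t)) where
  hasDerivAt_fst t := by
    convert! ((h.hasDerivAt_fst (c - t)).comp_const_sub c t).neg using 1
    rw [neg_neg]
  hasDerivAt_snd t := by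
    convert! (h.hasDerivAt_snd (c - t)).comp_const_sub c t using 1
    rw [hg]

theorem antiperiodic (h : IsSeparableHamiltonianSolution f g x y) (hf : ContDiff ℝ 1 f)
    (hg : ContDiff ℝ 1 g) (hf_odd : f.Odd) (hg_odd : g.Odd) {a b : ℝ} (ha : y a = 0)
    (hb : x b = 0) : Antiperiodic x (2 * (b - a)) ∧ Antiperiodic y (2 * (b - a)) := by
  have ha_self : 2 * a - a = a := by ring
  have hb_self : 2 * b - b = b := by ring
  obtain ⟨hxa, hya⟩ := h.unique hf hg (h.reflect_snd hf_odd (2 * a)) (t₀ := a)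
    (by simp only [ha_self]) (by simp only [ha_self, ha, neg_zero])
  obtain ⟨hxb, hyb⟩ := h.unique hf hg (h.reflect_fst hg_odd (2 * b)) (t₀ := b)
    (by simp only [hb_self, hb, neg_zero]) (by simp only [hb_self])
  have hcomp (t : ℝ) : 2 * b - (t + 2 * (b - a)) = 2 * a - t := by ring
  constructor <;> intro t
  · rw [congr_fun hxb, hcomp, congr_fun hxa t]
  · rw [congr_fun hyb, hcomp, congr_fun hya t, neg_neg]

section FirstZero

variable {a : ℝ}

theorem strictMonoOn_snd (h : IsSeparableHamiltonianSolution f g x y)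
    (hg : ∀ s, 0 < s → 0 < g s) {D : Set ℝ} (hD : Convex ℝ D)
    (hx : ∀ t ∈ interior D, 0 < x t) : StrictMonoOn y D :=
  strictMonoOn_of_deriv_pos hD h.continuous_snd.continuousOn fun t ht ↦ by
    rw [(h.hasDerivAt_snd t).deriv]
    exact hg _ (hx t ht)

theorem exists_fst_nonpos (h : IsSeparableHamiltonianSolution f g x y)
    (hf : ∀ s, 0 < s → 0 < f s) (hf_mono : MonotoneOn f (Ioi 0)) (hg : ∀ s, 0 < s → 0 < g s)
    (hy : 0 ≤ y a) : ∃ t ≥ a, x t ≤ 0 := by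
  by_contra! hx
  have hy_mono : StrictMonoOn y (Ici a) := h.strictMonoOn_snd hg (convex_Ici a) fun t ht ↦
    hx t (interior_subset ht)
  have hy_pos : 0 < y (a + 1) := hy.trans_lt (hy_mono self_mem_Ici (by simp) (by simp))
  have hslope := hf _ hy_pos
  have hx_deriv : ∀ t ∈ interior (Ici (a + 1)), deriv x t ≤ -f (y (a + 1)) := fun t ht ↦ by
    have hat : a + 1 ≤ t := interior_subset ht
    have hy_le : y (a + 1) ≤ y t :=
      hy_mono.monotoneOn (by simp) (mem_Ici.2 (by linarith)) hat
    rw [(h.hasDerivAt_fst t).deriv]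
    exact neg_le_neg (hf_mono hy_pos (hy_pos.trans_le hy_le) hy_le)
  set c := a + 1 + x (a + 1) / f (y (a + 1)) with hc
  have hac : a + 1 ≤ c := le_add_of_nonneg_right (div_pos (hx _ (by simp)) hslope).le
  have hx_le : x c - x (a + 1) ≤ -f (y (a + 1)) * (c - (a + 1)) :=
    (convex_Ici (a + 1)).image_sub_le_mul_sub_of_deriv_le h.continuous_fst.continuousOn
      (fun t _ ↦ (h.hasDerivAt_fst t).differentiableAt.differentiableWithinAt) hx_deriv
      _ self_mem_Ici _ hac hac
  have hdrop : f (y (a + 1)) * (c - (a + 1)) = x (a + 1) := by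
    rw [hc, add_sub_cancel_left, mul_div_cancel₀ _ hslope.ne']
  linarith [hx c (by linarith)]

theorem exists_first_zero_fst (h : IsSeparableHamiltonianSolution f g x y)
    (hf : ∀ s, 0 < s → 0 < f s) (hf_mono : MonotoneOn f (Ioi 0)) (hg : ∀ s, 0 < s → 0 < g s)
    (hx : 0 < x a) (hy : 0 ≤ y a) : ∃ b > a, x b = 0 ∧ ∀ t ∈ Ico a b, 0 < x t := by
  obtain ⟨c, hac, hxc⟩ := h.exists_fst_nonpos hf hf_mono hg hy
  obtain ⟨b, hb, hxb, hpos⟩ := exists_first_zero h.continuous_fst.continuousOn hac hx hxc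
  exact ⟨b, hb.1, hxb, hpos⟩

end FirstZero

section Power

theorem antiperiodic_of_pow {m n : ℕ} (h : IsSeparableHamiltonianSolution (· ^ m) (· ^ n) x y)
    (hm : Odd m) (hn : Odd n) {a b : ℝ} (ha : y a = 0) (hb : x b = 0) :
    Antiperiodic x (2 * (b - a)) ∧ Antiperiodic y (2 * (b - a)) :=
  h.antiperiodic (contDiff_id.pow m) (contDiff_id.pow n) hm.neg_pow hn.neg_pow ha hb

theorem exists_first_zero_fst_of_pow {m n : ℕ}
    (h : IsSeparableHamiltonianSolution (· ^ m) (· ^ n) x y) {a : ℝ} (hx : 0 < x a) (hy : 0 ≤ y a) :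
    ∃ b > a, x b = 0 ∧ ∀ t ∈ Ico a b, 0 < x t :=
  h.exists_first_zero_fst (fun _ hs ↦ pow_pos hs m)
    (fun _ hs _ _ hst ↦ pow_le_pow_left₀ (le_of_lt hs) hst m) (fun _ hs ↦ pow_pos hs n) hx hy

variable {α β : ℕ}

theorem hasDerivAt_fst_pow
    (h : IsSeparableHamiltonianSolution (· ^ (2 * α - 1)) (· ^ (2 * β - 1)) x y) (t : ℝ) :
    HasDerivAt (fun t ↦ x t ^ (2 * β))
      (-(2 * β * x t ^ (2 * β - 1) * y t ^ (2 * α - 1))) t := by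
  convert! (h.hasDerivAt_fst t).pow (2 * β) using 1
  push_cast
  ring

theorem one_sub_fst_pow (hα : 0 < α) (hβ : 0 < β)
    (h : IsSeparableHamiltonianSolution (· ^ (2 * α - 1)) (· ^ (2 * β - 1)) x y)
    {a : ℝ} (hx : x a = 1) (hy : y a = 0) (t : ℝ) :
    1 - x t ^ (2 * β) = β / α * y t ^ (2 * α) := by
  have hprimitive {k : ℕ} (hk : 0 < k) (s : ℝ) :
      HasDerivAt (fun s : ℝ ↦ s ^ (2 * k) / (2 * k)) (s ^ (2 * k - 1)) s := by
    convert! (hasDerivAt_pow (2 * k) s).div_const (2 * k : ℝ) using 1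
    push_cast
    field_simp
  have henergy := h.energy_eq (hprimitive hα) (hprimitive hβ) t a
  rw [hx, hy, one_pow, zero_pow (by lia), zero_div, add_zero] at henergy
  field_simp at henergy ⊢
  linarith

theorem one_sub_fst_pow_rpow_mul_rpow (hα : 0 < α) (hβ : 0 < β)
    (h : IsSeparableHamiltonianSolution (· ^ (2 * α - 1)) (· ^ (2 * β - 1)) x y)
    {a t : ℝ} (hxa : x a = 1) (hya : y a = 0) (hx : 0 ≤ x t) (hy : 0 ≤ y t) :
    (1 - x t ^ (2 * β)) ^ ((1 - 2 * α) / (2 * α) : ℝ) *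
        (x t ^ (2 * β)) ^ ((1 - 2 * β) / (2 * β) : ℝ) =
      (β / α : ℝ) ^ ((1 - 2 * α) / (2 * α) : ℝ) *
        (x t ^ (2 * β - 1) * y t ^ (2 * α - 1))⁻¹ := by
  have hx_rpow := pow_rpow_one_sub_div (n := 2 * β) (by lia) hx
  have hy_rpow := pow_rpow_one_sub_div (n := 2 * α) (by lia) hy
  push_cast at hx_rpow hy_rpow
  rw [h.one_sub_fst_pow hα hβ hxa hya, Real.mul_rpow (by positivity) (pow_nonneg hy _), hx_rpow,
    hy_rpow]
  ring

theorem integral_eq_mul_sub_of_fst_eq_zero (hα : 0 < α) (hβ : 0 < β)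
    (h : IsSeparableHamiltonianSolution (· ^ (2 * α - 1)) (· ^ (2 * β - 1)) x y)
    {a b : ℝ} (hxa : x a = 1) (hya : y a = 0) (hab : a < b) (hxb : x b = 0)
    (hx : ∀ t ∈ Ico a b, 0 < x t) :
    ∫ s in (0 : ℝ)..1, (1 - s) ^ ((1 - 2 * α) / (2 * α) : ℝ) * s ^ ((1 - 2 * β) / (2 * β) : ℝ) =
      2 * β * (β / α : ℝ) ^ ((1 - 2 * α) / (2 * α) : ℝ) * (b - a) := by
  set K : ℝ := 2 * β * (β / α : ℝ) ^ ((1 - 2 * α) / (2 * α) : ℝ) with hK_def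
  have hK : 0 < K := by positivity
  let φ (s : ℝ) : ℝ :=
    K⁻¹ * ((1 - s) ^ ((1 - 2 * α) / (2 * α) : ℝ) * s ^ ((1 - 2 * β) / (2 * β) : ℝ))
  have hx_pos : ∀ t ∈ Ioo a b, 0 < x t := fun t ht ↦ hx t (Ioo_subset_Ico_self ht)
  have hy_mono : StrictMonoOn y (Icc a b) := h.strictMonoOn_snd (fun _ hs ↦ pow_pos hs _)
    (convex_Icc a b) (by rwa [interior_Icc])
  have hy_pos : ∀ t ∈ Ioo a b, 0 < y t := fun t ht ↦ by
    simpa only [hya] using hy_mono (left_mem_Icc.2 hab.le) (Ioo_subset_Icc_self ht) ht.1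
  have hφ : ∀ t ∈ Ioo a b,
      φ (x t ^ (2 * β)) = (2 * β * x t ^ (2 * β - 1) * y t ^ (2 * α - 1))⁻¹ := fun t ht ↦ by
    simp only [φ]
    rw [h.one_sub_fst_pow_rpow_mul_rpow hα hβ hxa hya (hx_pos t ht).le (hy_pos t ht).le, hK_def]
    field_simp
  have hseparate : ∫ s in x b ^ (2 * β)..x a ^ (2 * β), φ s = b - a := by
    refine integral_eq_sub_of_hasDerivAt_neg_inv (u := fun t ↦ x t ^ (2 * β))
      (h.continuous_fst.pow _).continuousOn ?_ ?_ <;>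
      rw [uIoo_of_le hab.le] <;> intro t ht <;> rw [hφ t ht]
    · rw [inv_inv]
      exact h.hasDerivAt_fst_pow t
    · have hxt := hx_pos t ht
      have hyt := hy_pos t ht
      positivity
  rwa [hxa, hxb, one_pow, zero_pow (by lia), intervalIntegral.integral_const_mul,
    inv_mul_eq_iff_eq_mul₀ hK.ne'] at hseparate

theorem mul_integral_eq_four_mul_sub (hα : 0 < α) (hβ : 0 < β)
    (h : IsSeparableHamiltonianSolution (· ^ (2 * α - 1)) (· ^ (2 * β - 1)) x y)
    {a b : ℝ} (hxa : x a = 1) (hya : y a = 0) (hab : a < b) (hxb : x b = 0)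
    (hx : ∀ t ∈ Ico a b, 0 < x t) :
    2 * (α : ℝ) ^ ((1 - 2 * α) / (2 * α) : ℝ) / (β : ℝ) ^ (1 / (2 * α) : ℝ) *
        ∫ s in (0 : ℝ)..1, (1 - s) ^ ((1 - 2 * α) / (2 * α) : ℝ) *
          s ^ ((1 - 2 * β) / (2 * β) : ℝ) = 4 * (b - a) := by
  have hα' : (0 : ℝ) < α := Nat.cast_pos.2 hα
  have hβ' : (0 : ℝ) < β := Nat.cast_pos.2 hβ
  have hexp : 1 / (2 * α : ℝ) = (1 - 2 * α) / (2 * α) + 1 := by field_simp; ring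
  rw [h.integral_eq_mul_sub_of_fst_eq_zero hα hβ hxa hya hab hxb hx, hexp]
  set p : ℝ := (1 - 2 * α) / (2 * α)
  calc 2 * (α : ℝ) ^ p / (β : ℝ) ^ (p + 1) * (2 * β * (β / α : ℝ) ^ p * (b - a))
      = 4 * β * ((α : ℝ) ^ p / (β : ℝ) ^ (p + 1) * (β / α : ℝ) ^ p) * (b - a) := by ring
    _ = 4 * (b - a) := by
      rw [rpow_div_rpow_add_one_mul_div_rpow hα' hβ', mul_inv_cancel_right₀ hβ'.ne']

end Power

end IsSeparableHamiltonianSolution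

/-- Let `(Cs, Sn)` be the (unique global) solution of the Cauchy problem
`Cs' = -Sn^(2α-1)`, `Sn' = Cs^(2β-1)`, `Cs 0 = 1`, `Sn 0 = 0`, and let
`T = (2·α^((1-2α)/(2α)) / β^(1/(2α))) · ∫₀¹ (1-t)^((1-2α)/(2α)) · t^((1-2β)/(2β)) dt`.
Then `T > 0` and both `Cs` and `Sn` are `T`-periodic. -/
theorem stmt_2 (α β : ℕ) (hα : 0 < α) (hβ : 0 < β) (Cs Sn : ℝ → ℝ)
    (hCs : ∀ θ : ℝ, HasDerivAt Cs (-(Sn θ) ^ (2 * α - 1)) θ)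
    (hSn : ∀ θ : ℝ, HasDerivAt Sn ((Cs θ) ^ (2 * β - 1)) θ)
    (hCs0 : Cs 0 = 1) (hSn0 : Sn 0 = 0)
    (T : ℝ)
    (hT : T = 2 * (α : ℝ) ^ ((1 - 2 * (α : ℝ)) / (2 * (α : ℝ))) /
        (β : ℝ) ^ (1 / (2 * (α : ℝ))) *
        ∫ t in (0 : ℝ)..1,
          (1 - t) ^ ((1 - 2 * (α : ℝ)) / (2 * (α : ℝ))) *
          t ^ ((1 - 2 * (β : ℝ)) / (2 * (β : ℝ)))) :
    0 < T ∧ ∀ θ : ℝ, Cs (θ + T) = Cs θ ∧ Sn (θ + T) = Sn θ := by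
  have h : IsSeparableHamiltonianSolution (· ^ (2 * α - 1)) (· ^ (2 * β - 1)) Cs Sn := ⟨hCs, hSn⟩
  have hodd {k : ℕ} (hk : 0 < k) : Odd (2 * k - 1) := ⟨k - 1, by lia⟩
  obtain ⟨τ, hτ, hCsτ, hCs_pos⟩ := h.exists_first_zero_fst_of_pow (hCs0 ▸ one_pos) hSn0.ge
  have hT_eq : T = 2 * (2 * (τ - 0)) := by
    rw [hT, h.mul_integral_eq_four_mul_sub hα hβ hCs0 hSn0 hτ hCsτ hCs_pos]
    ring
  obtain ⟨hCs_anti, hSn_anti⟩ := h.antiperiodic_of_pow (hodd hα) (hodd hβ) hSn0 hCsτ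
  rw [hT_eq]
  exact ⟨by simpa using hτ, fun θ ↦ ⟨hCs_anti.periodic_two_mul θ, hSn_anti.periodic_two_mul θ⟩⟩
end

section
/- Let α and β be positive integers and let (Cs, Sn) : ℝ → ℝ × ℝ be the unique global solution of the Cauchy problem Cs' = −Sn^(2α−1), Sn' = Cs^(2β−1), Cs(0) = 1, Sn(0) = 0. Then for every θ ∈ ℝ: (Cs(θ), Sn(θ)) ≠ (0, 0); moreover Cs(θ)^(2β) ≤ 1 and Sn(θ)^(2α) ≤ α/β. -/
/-!
The system `x' = -y^(m-1)`, `y' = x^(n-1)` is, up to the constant factor `m * n` in time, the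
Hamiltonian system of `H(x, y) = m * x^n + n * y^m`, so `H` is a first integral. A solution with
nonzero energy cannot reach the origin, where `H` vanishes. When `m` and `n` are even, both terms
of `H` are nonnegative, and each is therefore bounded by the initial energy.
-/

/-- The first integral `m * x ^ n + n * y ^ m` of `x' = -y ^ (m - 1)`, `y' = x ^ (n - 1)`. It is
`m * n` times the usual energy `x ^ n / n + y ^ m / m`, which avoids dividing by the exponents. -/
def powerEnergy {R : Type*} [Semiring R] (m n : ℕ) (x y : R) : R :=
  m * x ^ n + n * y ^ m

section Energy

theorem powerEnergy_swap {R : Type*} [Semiring R] (m n : ℕ) (x y : R) :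
    powerEnergy n m y x = powerEnergy m n x y :=
  add_comm _ _

theorem powerEnergy_zero_zero {R : Type*} [Semiring R] {m n : ℕ} (hm : m ≠ 0) (hn : n ≠ 0) :
    powerEnergy m n (0 : R) 0 = 0 := by
  simp [powerEnergy, hm, hn]

theorem powerEnergy_one_zero {R : Type*} [Semiring R] {m : ℕ} (hm : m ≠ 0) (n : ℕ) :
    powerEnergy m n (1 : R) 0 = m := by
  simp [powerEnergy, hm]

variable {K : Type*} [Field K] [LinearOrder K] [IsStrictOrderedRing K] {m n : ℕ}

theorem pow_left_le_powerEnergy_div (hm : m ≠ 0) (hm_even : Even m) (x y : K) :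
    x ^ n ≤ powerEnergy m n x y / m := by
  have hm_pos : (0 : K) < m := Nat.cast_pos.mpr hm.pos
  have hy : 0 ≤ n * y ^ m := mul_nonneg n.cast_nonneg (hm_even.pow_nonneg y)
  exact (le_div_iff₀' hm_pos).mpr (le_add_of_nonneg_right hy)

theorem pow_right_le_powerEnergy_div (hn : n ≠ 0) (hn_even : Even n) (x y : K) :
    y ^ m ≤ powerEnergy m n x y / n :=
  powerEnergy_swap m n x y ▸ pow_left_le_powerEnergy_div hn hn_even y x

end Energy

/-- The pair `(x, y)` is a global solution of `x' = -y ^ (m - 1)`, `y' = x ^ (n - 1)`, with no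
condition on its initial values. The generalized cosine and sine `(Cs, Sn)` with parameters `α`,
`β` are the solution with `m = 2 * α`, `n = 2 * β` starting at `(1, 0)`. -/
structure IsPowerFlow {𝕜 : Type*} [NontriviallyNormedField 𝕜] (m n : ℕ) (x y : 𝕜 → 𝕜) :
    Prop where
  hasDerivAt_left : ∀ t, HasDerivAt x (-(y t) ^ (m - 1)) t
  hasDerivAt_right : ∀ t, HasDerivAt y (x t ^ (n - 1)) t

namespace IsPowerFlow

theorem hasDerivAt_powerEnergy {𝕜 : Type*} [NontriviallyNormedField 𝕜] {m n : ℕ} {x y : 𝕜 → 𝕜}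
    (h : IsPowerFlow m n x y) (t : 𝕜) :
    HasDerivAt (fun s ↦ powerEnergy m n (x s) (y s)) 0 t := by
  have hx := ((h.hasDerivAt_left t).fun_pow n).const_mul (m : 𝕜)
  have hy := ((h.hasDerivAt_right t).fun_pow m).const_mul (n : 𝕜)
  exact (hx.add hy).congr_deriv (by ring)

variable {𝕜 : Type*} [RCLike 𝕜] {m n : ℕ} {x y : 𝕜 → 𝕜}

theorem powerEnergy_eq (h : IsPowerFlow m n x y) (s t : 𝕜) :
    powerEnergy m n (x s) (y s) = powerEnergy m n (x t) (y t) :=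
  is_const_of_deriv_eq_zero (fun r ↦ (h.hasDerivAt_powerEnergy r).differentiableAt)
    (fun r ↦ (h.hasDerivAt_powerEnergy r).deriv) s t

theorem ne_zero_of_powerEnergy_ne_zero (h : IsPowerFlow m n x y) (hm : m ≠ 0) (hn : n ≠ 0)
    {s : 𝕜} (hs : powerEnergy m n (x s) (y s) ≠ 0) (t : 𝕜) : (x t, y t) ≠ (0, 0) := by
  intro ht
  obtain ⟨hx, hy⟩ := Prod.mk.inj ht
  exact hs (by rw [h.powerEnergy_eq s t, hx, hy, powerEnergy_zero_zero hm hn])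

end IsPowerFlow

/-- Let `(Cs, Sn)` be the (unique global) solution of the Cauchy problem
`Cs' = -Sn^(2α-1)`, `Sn' = Cs^(2β-1)`, `Cs 0 = 1`, `Sn 0 = 0`. Then for every `θ`,
`(Cs θ, Sn θ) ≠ (0, 0)`, `Cs θ ^ (2β) ≤ 1` and `Sn θ ^ (2α) ≤ α / β`. -/
theorem stmt_3 (α β : ℕ) (hα : 0 < α) (hβ : 0 < β) (Cs Sn : ℝ → ℝ)
    (hCs : ∀ θ : ℝ, HasDerivAt Cs (-(Sn θ) ^ (2 * α - 1)) θ)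
    (hSn : ∀ θ : ℝ, HasDerivAt Sn ((Cs θ) ^ (2 * β - 1)) θ)
    (hCs0 : Cs 0 = 1) (hSn0 : Sn 0 = 0) :
    ∀ θ : ℝ, (Cs θ, Sn θ) ≠ ((0 : ℝ), (0 : ℝ)) ∧
      (Cs θ) ^ (2 * β) ≤ 1 ∧ (Sn θ) ^ (2 * α) ≤ (α : ℝ) / (β : ℝ) := by
  intro θ
  have hm : 2 * α ≠ 0 := by positivity
  have hn : 2 * β ≠ 0 := by positivity
  have hm_cast : ((2 * α : ℕ) : ℝ) ≠ 0 := Nat.cast_ne_zero.mpr hm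
  have hflow : IsPowerFlow (2 * α) (2 * β) Cs Sn := ⟨hCs, hSn⟩
  have energy_zero : powerEnergy (2 * α) (2 * β) (Cs 0) (Sn 0) = (2 * α : ℕ) := by
    rw [hCs0, hSn0, powerEnergy_one_zero hm]
  have energy : powerEnergy (2 * α) (2 * β) (Cs θ) (Sn θ) = (2 * α : ℕ) :=
    (hflow.powerEnergy_eq θ 0).trans energy_zero
  refine ⟨hflow.ne_zero_of_powerEnergy_ne_zero hm hn (energy_zero.trans_ne hm_cast) θ, ?_, ?_⟩
  · calc Cs θ ^ (2 * β)
        ≤ powerEnergy (2 * α) (2 * β) (Cs θ) (Sn θ) / (2 * α : ℕ) :=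
          pow_left_le_powerEnergy_div hm (even_two_mul α) _ _
      _ = 1 := by rw [energy, div_self hm_cast]
  · calc Sn θ ^ (2 * α)
        ≤ powerEnergy (2 * α) (2 * β) (Cs θ) (Sn θ) / (2 * β : ℕ) :=
          pow_right_le_powerEnergy_div hn (even_two_mul β) _ _
      _ = α / β := by
          rw [energy, Nat.cast_mul, Nat.cast_mul, mul_div_mul_left _ _ (by norm_num)]
end

section
/- Let S ⊆ ℤ² be a finite set and a, b : ℤ² → ℝ coefficient functions with a_{m,n} = 0 whenever m < −1 or n ≤ −1, and b_{m,n} = 0 whenever m ≤ −1 or n < −1. Let P(x,y) = Σ_{(m,n)∈S} a_{m,n}·x^(m+1)·y^n and Q(x,y) = Σ_{(m,n)∈S} b_{m,n}·x^m·y^(n+1) be the components of the vector field X written in the logarithmic basis. Let α, β be positive integers, let I ⊆ ℝ be an open interval, and let x, y : I → ℝ be differentiable with x(t) > 0, x'(t) = P(x(t), y(t)) and y'(t) = Q(x(t), y(t)) for all t ∈ I. Define u(t) = y(t)·x(t)^(−β/α) and v(t) = x(t)^(−1/α), using real powers of the positive number x(t). Then for every t ∈ I: u'(t) = Σ_{(m,n)∈S}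 (b_{m,n} − (β/α)·a_{m,n})·u(t)^(n+1)·v(t)^(−(αm+βn)) and v'(t) = −(1/α)·Σ_{(m,n)∈S} a_{m,n}·u(t)^n·v(t)^(1−(αm+βn)), where powers of v(t) > 0 are integer powers and all powers of u(t) occurring with nonzero coefficient have nonnegative integer exponent. -/
/-!
On `x > 0` the logarithmic derivatives of the chart coordinates are `v' / v = -(1 / α) * x' / x`
and `u' / u = y' / y - (β / α) * x' / x`. For a field in the logarithmic basis, `x' / x` and
`y' / y` are combinations of the monomials `x ^ m * y ^ n = u ^ n * v ^ (-(α * m + β * n))`, so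
the equations for `u` and `v` come out term by term. Only points with `y = 0` need care: there
`y' / y` must be kept multiplied by `y`, and `y * y ^ n = y ^ (n + 1)` fails for `n = -1`.
-/

namespace PoincareLyapunov

/-- The coordinate `v = x ^ (-1 / α)` of the Poincaré–Lyapunov chart in the `x`-positive
direction, which inverts `x = v ^ (-α)`. The weight `α` may be any nonzero real. -/
noncomputable def vCoord (α x : ℝ) : ℝ := x ^ (-1 / α)

/-- The coordinate `u = y * x ^ (-β / α)` of the Poincaré–Lyapunov chart in the `x`-positive
direction, which inverts `y = u * v ^ (-β)`. The weights may be any reals with `α ≠ 0`. -/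
noncomputable def uCoord (α β x y : ℝ) : ℝ := y * x ^ (-β / α)

section Coordinates

variable {α x : ℝ}

theorem vCoord_pos (α : ℝ) (hx : 0 < x) : 0 < vCoord α x :=
  Real.rpow_pos_of_pos hx _

theorem vCoord_rpow (α s : ℝ) (hx : 0 < x) : vCoord α x ^ s = x ^ (-s / α) := by
  rw [vCoord, ← Real.rpow_mul hx.le]
  ring_nf

theorem vCoord_rpow_neg (hα : α ≠ 0) (hx : 0 < x) : vCoord α x ^ (-α) = x := by
  rw [vCoord_rpow α _ hx, neg_neg, div_self hα, Real.rpow_one]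

theorem uCoord_eq_mul_vCoord_rpow (α β y : ℝ) (hx : 0 < x) :
    uCoord α β x y = y * vCoord α x ^ β := by
  rw [uCoord, vCoord_rpow α β hx]

theorem zpow_mul_zpow_eq_uCoord_vCoord (hα : α ≠ 0) (β y : ℝ) (hx : 0 < x) (m n : ℤ) :
    x ^ m * y ^ n = uCoord α β x y ^ n * vCoord α x ^ (-(α * m + β * n)) := by
  have hv : 0 < vCoord α x := vCoord_pos α hx
  have x_zpow : x ^ m = vCoord α x ^ (-α * m) := by
    rw [Real.rpow_mul_intCast hv.le, vCoord_rpow_neg hα hx]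
  calc x ^ m * y ^ n
      = y ^ n * vCoord α x ^ (β * n + -(α * m + β * n)) := by
        rw [x_zpow, mul_comm]
        ring_nf
    _ = uCoord α β x y ^ n * vCoord α x ^ (-(α * m + β * n)) := by
        rw [uCoord_eq_mul_vCoord_rpow α β y hx, mul_zpow, ← Real.rpow_mul_intCast hv.le,
          mul_assoc, ← Real.rpow_add hv]

end Coordinates

section Derivatives

variable {x y : ℝ → ℝ} {x' y' t : ℝ} {I : Set ℝ}

theorem hasDerivWithinAt_rpow_const_logDeriv (r : ℝ) (hxt : 0 < x t)
    (hx : HasDerivWithinAt x x' I t) :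
    HasDerivWithinAt (fun s => x s ^ r) (r * x t ^ r * (x' / x t)) I t := by
  refine (hx.rpow_const (p := r) (Or.inl hxt.ne')).congr_deriv ?_
  rw [Real.rpow_sub_one hxt.ne']
  ring

theorem hasDerivWithinAt_vCoord (α : ℝ) (hxt : 0 < x t) (hx : HasDerivWithinAt x x' I t) :
    HasDerivWithinAt (fun s => vCoord α (x s)) (-(1 / α) * (vCoord α (x t) * (x' / x t))) I t := by
  refine (hasDerivWithinAt_rpow_const_logDeriv (-1 / α) hxt hx).congr_deriv ?_
  rw [vCoord]
  ring

theorem hasDerivWithinAt_uCoord (α β : ℝ) (hxt : 0 < x t) (hx : HasDerivWithinAt x x' I t)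
    (hy : HasDerivWithinAt y y' I t) :
    HasDerivWithinAt (fun s => uCoord α β (x s) (y s))
      (vCoord α (x t) ^ β * (y' - β / α * (y t * (x' / x t)))) I t := by
  refine (hy.mul (hasDerivWithinAt_rpow_const_logDeriv (-β / α) hxt hx)).congr_deriv ?_
  rw [vCoord_rpow α β hxt]
  ring

end Derivatives

section LaurentSums

variable {K : Type*} [Field K] {x y : K} (S : Finset (ℤ × ℤ)) (a : ℤ × ℤ → K)

theorem sum_zpow_add_one_div (hx : x ≠ 0) :
    (∑ p ∈ S, a p * x ^ (p.1 + 1) * y ^ p.2) / x = ∑ p ∈ S, a p * (x ^ p.1 * y ^ p.2) := by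
  rw [Finset.sum_div]
  refine Finset.sum_congr rfl fun p _ => ?_
  rw [zpow_add_one₀ hx]
  field_simp

theorem mul_sum_zpow_add_one_div (hx : x ≠ 0) (ha : y = 0 → ∀ p ∈ S, p.2 = -1 → a p = 0) :
    y * ((∑ p ∈ S, a p * x ^ (p.1 + 1) * y ^ p.2) / x) =
      ∑ p ∈ S, a p * (x ^ p.1 * y ^ (p.2 + 1)) := by
  rw [sum_zpow_add_one_div S a hx, Finset.mul_sum]
  refine Finset.sum_congr rfl fun p hp => ?_
  by_cases hpole : y = 0 ∧ p.2 = -1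
  · rw [ha hpole.1 p hp hpole.2]
    ring
  · have y_zpow : y ^ (p.2 + 1) = y ^ p.2 * y := by
      rw [zpow_add' (by grind), zpow_one]
    rw [y_zpow]
    ring

end LaurentSums

section LogarithmicBasis

variable {α x : ℝ} (S : Finset (ℤ × ℤ)) (a b : ℤ × ℤ → ℝ)

theorem vCoord_mul_sum (hα : α ≠ 0) (β y : ℝ) (hx : 0 < x) :
    vCoord α x * ((∑ p ∈ S, a p * x ^ (p.1 + 1) * y ^ p.2) / x) =
      ∑ p ∈ S, a p * uCoord α β x y ^ p.2 * vCoord α x ^ (1 - (α * p.1 + β * p.2)) := by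
  rw [sum_zpow_add_one_div S a hx.ne', Finset.mul_sum]
  refine Finset.sum_congr rfl fun p _ => ?_
  rw [zpow_mul_zpow_eq_uCoord_vCoord hα β y hx, sub_eq_add_neg,
    Real.rpow_add (vCoord_pos α hx), Real.rpow_one]
  ring

theorem vCoord_rpow_mul_zpow_mul_zpow_add_one (hα : α ≠ 0) (β y : ℝ) (hx : 0 < x) (m n : ℤ) :
    vCoord α x ^ β * (x ^ m * y ^ (n + 1)) =
      uCoord α β x y ^ (n + 1) * vCoord α x ^ (-(α * m + β * n)) := by
  rw [zpow_mul_zpow_eq_uCoord_vCoord hα β y hx, mul_left_comm,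
    ← Real.rpow_add (vCoord_pos α hx)]
  push_cast
  ring_nf

theorem vCoord_rpow_mul_sum (hα : α ≠ 0) (β : ℝ) {y : ℝ} (hx : 0 < x)
    (ha : y = 0 → ∀ p ∈ S, p.2 = -1 → a p = 0) :
    vCoord α x ^ β * ((∑ p ∈ S, b p * x ^ p.1 * y ^ (p.2 + 1)) -
        β / α * (y * ((∑ p ∈ S, a p * x ^ (p.1 + 1) * y ^ p.2) / x))) =
      ∑ p ∈ S, (b p - β / α * a p) * uCoord α β x y ^ (p.2 + 1) *
        vCoord α x ^ (-(α * p.1 + β * p.2)) := by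
  rw [mul_sum_zpow_add_one_div S a hx.ne' ha, Finset.mul_sum, ← Finset.sum_sub_distrib,
    Finset.mul_sum]
  refine Finset.sum_congr rfl fun p _ => ?_
  linear_combination
    (b p - β / α * a p) * vCoord_rpow_mul_zpow_mul_zpow_add_one hα β y hx p.1 p.2

end LogarithmicBasis

end PoincareLyapunov

open PoincareLyapunov in
theorem stmt_5_general (S : Finset (ℤ × ℤ)) (a b : ℤ × ℤ → ℝ) {α : ℝ} (hα : α ≠ 0) (β : ℝ)
    {I : Set ℝ} {x y u v : ℝ → ℝ} {t : ℝ} (ht : t ∈ I) (hxt : 0 < x t)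
    -- `0 ^ n = 0` for `n < 0`, so a pole of the field at `y t = 0` has to be excluded explicitly.
    (hreg : y t ≠ 0 ∨ ∀ p ∈ S, (a p ≠ 0 → 0 ≤ p.2) ∧ (b p ≠ 0 → -1 ≤ p.2))
    (hx : HasDerivWithinAt x (∑ p ∈ S, a p * x t ^ (p.1 + 1) * y t ^ p.2) I t)
    (hy : HasDerivWithinAt y (∑ p ∈ S, b p * x t ^ p.1 * y t ^ (p.2 + 1)) I t)
    (hu : ∀ s ∈ I, u s = y s * x s ^ (-β / α)) (hv : ∀ s ∈ I, v s = x s ^ (-1 / α)) :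
    HasDerivWithinAt u (∑ p ∈ S, (b p - β / α * a p) * u t ^ (p.2 + 1) *
        v t ^ (-(α * p.1 + β * p.2))) I t ∧
      HasDerivWithinAt v (-(1 / α) * ∑ p ∈ S, a p * u t ^ p.2 *
        v t ^ (1 - (α * p.1 + β * p.2))) I t := by
  have ha : y t = 0 → ∀ p ∈ S, p.2 = -1 → a p = 0 := by grind
  have ut : u t = uCoord α β (x t) (y t) := hu t ht
  have vt : v t = vCoord α (x t) := hv t ht
  rw [ut, vt, ← vCoord_rpow_mul_sum S a b hα β hxt ha, ← vCoord_mul_sum S a hα β (y t) hxt]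
  exact ⟨(hasDerivWithinAt_uCoord α β hxt hx hy).congr hu ut,
    (hasDerivWithinAt_vCoord α hxt hx).congr hv vt⟩

/-- Poincaré–Lyapunov chart in the `x`-positive direction. If `(x, y)` solves the
polynomial system given in the logarithmic basis by coefficients `a, b` supported on `S`, with
`x > 0` on an open interval `I`, then `u = y·x^(-β/α)` and `v = x^(-1/α)` satisfy the stated
differential equations. -/
theorem stmt_5 (S : Finset (ℤ × ℤ)) (a b : ℤ × ℤ → ℝ)
    (ha : ∀ m n : ℤ, m < -1 ∨ n ≤ -1 → a (m, n) = 0)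
    (hb : ∀ m n : ℤ, m ≤ -1 ∨ n < -1 → b (m, n) = 0)
    (α β : ℕ) (hα : 0 < α) (hβ : 0 < β)
    (I : Set ℝ) (hIopen : IsOpen I) (hIconn : I.OrdConnected)
    (x y u v : ℝ → ℝ)
    (hxpos : ∀ t ∈ I, 0 < x t)
    (hx : ∀ t ∈ I, HasDerivAt x (∑ p ∈ S, a p * x t ^ (p.1 + 1) * y t ^ p.2) t)
    (hy : ∀ t ∈ I, HasDerivAt y (∑ p ∈ S, b p * x t ^ p.1 * y t ^ (p.2 + 1)) t)
    (hu : ∀ t ∈ I, u t = y t * x t ^ (-(β : ℝ) / (α : ℝ)))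
    (hv : ∀ t ∈ I, v t = x t ^ (-(1 : ℝ) / (α : ℝ))) :
    ∀ t ∈ I,
      HasDerivAt u (∑ p ∈ S, (b p - (β : ℝ) / (α : ℝ) * a p) * u t ^ (p.2 + 1) *
        v t ^ (-((α : ℤ) * p.1 + (β : ℤ) * p.2))) t ∧
      HasDerivAt v (-(1 / (α : ℝ)) * ∑ p ∈ S, a p * u t ^ p.2 *
        v t ^ (1 - ((α : ℤ) * p.1 + (β : ℤ) * p.2))) t := by
  intro t ht
  have h := stmt_5_general S a b (Nat.cast_ne_zero.2 hα.ne') β ht (hxpos t ht)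
    (Or.inr fun p _ => by grind) (hx t ht).hasDerivWithinAt (hy t ht).hasDerivWithinAt hu hv
  exact_mod_cast h.imp (·.hasDerivAt (hIopen.mem_nhds ht)) (·.hasDerivAt (hIopen.mem_nhds ht))
end

section
/- Let S ⊆ ℤ² be a finite set and a, b : ℤ² → ℝ coefficient functions with a_{m,n} = 0 whenever m < −1 or n ≤ −1, and b_{m,n} = 0 whenever m ≤ −1 or n < −1. Let P(x,y) = Σ_{(m,n)∈S} a_{m,n}·x^(m+1)·y^n and Q(x,y) = Σ_{(m,n)∈S} b_{m,n}·x^m·y^(n+1). Let α, β be positive integers, let I ⊆ ℝ be an open interval, and let x, y : I → ℝ be differentiable with y(t) > 0, x'(t) = P(x(t), y(t)) and y'(t) = Q(x(t), y(t)) for all t ∈ I. Define u(t) = x(t)·y(t)^(−α/β) and v(t) = y(t)^(−1/β), using real powers of the positive number y(t). Then for every t ∈ I: u'(t) = Σ_{(m,n)∈S} (a_{m,n} − (α/β)·b_{m,n})·u(t)^(m+1)·v(t)^(−(αm+βn)) and v'(t) = −(1/β)·Σ_{(m,n)∈S} b_{m,n}·u(t)^m·v(t)^(1−(αm+βn)),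 where powers of v(t) > 0 are integer powers and all powers of u(t) occurring with nonzero coefficient have nonnegative integer exponent. -/
/-!
In the logarithmic basis `y' / y = ∑ b x ^ m y ^ n`, so differentiating `y ^ c` or `x y ^ c` only
shifts every `y`-exponent by `c` and replaces the coefficients by `c b`, respectively `a + c b`.
Take `c = -1 / β` for `v` and `c = -α / β` for `u`. The resulting monomials in `x` and `y` are
monomials in `u` and `v`, because `u ^ m v ^ s = x ^ m y ^ (-(α m + s) / β)`.
-/

section LogarithmicBasis

variable {ι : Type*} {S : Finset ι} {a b : ι → ℝ} {m : ι → ℤ} {n : ι → ℝ}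
  {x y : ℝ → ℝ} {t : ℝ}

theorem hasDerivAt_rpow_of_logarithmic (c : ℝ) (hpos : 0 < y t)
    (hy : HasDerivAt y (∑ i ∈ S, b i * x t ^ m i * y t ^ (n i + 1)) t) :
    HasDerivAt (fun s ↦ y s ^ c) (c * ∑ i ∈ S, b i * x t ^ m i * y t ^ (n i + c)) t := by
  refine (hy.rpow_const (.inl hpos.ne')).congr_deriv ?_
  simp only [Finset.sum_mul, Finset.mul_sum]
  refine Finset.sum_congr rfl fun i _ ↦ ?_
  have shift : y t ^ (n i + c) = y t ^ (n i + 1) * y t ^ (c - 1) := by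
    rw [← Real.rpow_add hpos]
    ring_nf
  rw [shift]
  ring

theorem hasDerivAt_mul_rpow_of_logarithmic (c : ℝ) (hpos : 0 < y t)
    (hb : x t = 0 → ∀ i ∈ S, m i = -1 → b i = 0)
    (hx : HasDerivAt x (∑ i ∈ S, a i * x t ^ (m i + 1) * y t ^ n i) t)
    (hy : HasDerivAt y (∑ i ∈ S, b i * x t ^ m i * y t ^ (n i + 1)) t) :
    HasDerivAt (fun s ↦ x s * y s ^ c)
      (∑ i ∈ S, (a i + c * b i) * x t ^ (m i + 1) * y t ^ (n i + c)) t := by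
  refine (hx.mul (hasDerivAt_rpow_of_logarithmic c hpos hy)).congr_deriv ?_
  simp only [Finset.sum_mul, Finset.mul_sum]
  rw [← Finset.sum_add_distrib]
  refine Finset.sum_congr rfl fun i hi ↦ ?_
  -- In Lean `0 * 0 ^ (-1) = 0` but `0 ^ 0 = 1`, hence the condition on `b`.
  have absorb : b i * (x t ^ m i * x t) = b i * x t ^ (m i + 1) := by
    by_cases hpole : x t = 0 ∧ m i = -1
    · simp only [hb hpole.1 i hi hpole.2, zero_mul]
    · rw [zpow_add' (by grind), zpow_one]
  rw [Real.rpow_add hpos]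
  linear_combination c * (y t ^ n i * y t ^ c) * absorb

end LogarithmicBasis

theorem chart_zpow_mul_rpow {y : ℝ} (hy : 0 < y) (x α β s : ℝ) (m : ℤ) :
    (x * y ^ (-α / β)) ^ m * (y ^ (-1 / β)) ^ s = x ^ m * y ^ (-(α * m + s) / β) := by
  rw [mul_zpow, ← Real.rpow_intCast (y ^ _), ← Real.rpow_mul hy.le, ← Real.rpow_mul hy.le,
    mul_assoc, ← Real.rpow_add hy]
  ring_nf

/-- `hreg` keeps out the negative powers at zeros of `x`, to which Lean gives the value `0`. -/
theorem stmt_6_general {ι : Type*} {S : Finset ι} {a b : ι → ℝ} {m : ι → ℤ} {n : ι → ℝ}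
    {α β : ℝ} (hβ : β ≠ 0) {I : Set ℝ} (hI : IsOpen I) {x y u v : ℝ → ℝ}
    (hreg : ∀ t ∈ I, x t = 0 → ∀ i ∈ S, (m i < -1 → a i = 0) ∧ (m i ≤ -1 → b i = 0))
    (hypos : ∀ t ∈ I, 0 < y t)
    (hx : ∀ t ∈ I, HasDerivAt x (∑ i ∈ S, a i * x t ^ (m i + 1) * y t ^ n i) t)
    (hy : ∀ t ∈ I, HasDerivAt y (∑ i ∈ S, b i * x t ^ m i * y t ^ (n i + 1)) t)
    (hu : ∀ t ∈ I, u t = x t * y t ^ (-α / β))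
    (hv : ∀ t ∈ I, v t = y t ^ (-1 / β)) :
    ∀ t ∈ I,
      HasDerivAt u (∑ i ∈ S, (a i - α / β * b i) * u t ^ (m i + 1) *
        v t ^ (-(α * m i + β * n i))) t ∧
      HasDerivAt v (-(1 / β) * ∑ i ∈ S, b i * u t ^ m i *
        v t ^ (1 - (α * m i + β * n i))) t := by
  intro t ht
  have hpos := hypos t ht
  have hb : x t = 0 → ∀ i ∈ S, m i = -1 → b i = 0 :=
    fun hxt i hi hm ↦ (hreg t ht hxt i hi).2 hm.le
  have hu' := (hasDerivAt_mul_rpow_of_logarithmic (-α / β) hpos hb (hx t ht)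
    (hy t ht)).congr_of_eventuallyEq (Set.EqOn.eventuallyEq_of_mem hu (hI.mem_nhds ht))
  have hv' := (hasDerivAt_rpow_of_logarithmic (-1 / β) hpos
    (hy t ht)).congr_of_eventuallyEq (Set.EqOn.eventuallyEq_of_mem hv (hI.mem_nhds ht))
  refine ⟨hu'.congr_deriv (Finset.sum_congr rfl fun i _ ↦ ?_), hv'.congr_deriv ?_⟩
  · have exponent : -(α * (m i + 1 : ℤ) + -(α * m i + β * n i)) / β = n i + -α / β := by
      push_cast
      field
    rw [hu t ht, hv t ht, mul_assoc (a i - _), chart_zpow_mul_rpow hpos, exponent]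
    ring
  · rw [← neg_div]
    congr 1
    refine Finset.sum_congr rfl fun i _ ↦ ?_
    have exponent : -(α * m i + (1 - (α * m i + β * n i))) / β = n i + -1 / β := by
      field
    rw [hu t ht, hv t ht, mul_assoc, mul_assoc, chart_zpow_mul_rpow hpos, exponent]

/-- Poincaré–Lyapunov chart in the `y`-positive direction. If `(x, y)` solves the
polynomial system given in the logarithmic basis by coefficients `a, b` supported on `S`, with
`y > 0` on an open interval `I`, then `u = x·y^(-α/β)` and `v = y^(-1/β)` satisfy the stated
differential equations. -/
theorem stmt_6 (S : Finset (ℤ × ℤ)) (a b : ℤ × ℤ → ℝ)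
    (ha : ∀ m n : ℤ, m < -1 ∨ n ≤ -1 → a (m, n) = 0)
    (hb : ∀ m n : ℤ, m ≤ -1 ∨ n < -1 → b (m, n) = 0)
    (α β : ℕ) (hα : 0 < α) (hβ : 0 < β)
    (I : Set ℝ) (hIopen : IsOpen I) (hIconn : I.OrdConnected)
    (x y u v : ℝ → ℝ)
    (hypos : ∀ t ∈ I, 0 < y t)
    (hx : ∀ t ∈ I, HasDerivAt x (∑ p ∈ S, a p * x t ^ (p.1 + 1) * y t ^ p.2) t)
    (hy : ∀ t ∈ I, HasDerivAt y (∑ p ∈ S, b p * x t ^ p.1 * y t ^ (p.2 + 1)) t)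
    (hu : ∀ t ∈ I, u t = x t * y t ^ (-(α : ℝ) / (β : ℝ)))
    (hv : ∀ t ∈ I, v t = y t ^ (-(1 : ℝ) / (β : ℝ))) :
    ∀ t ∈ I,
      HasDerivAt u (∑ p ∈ S, (a p - (α : ℝ) / (β : ℝ) * b p) * u t ^ (p.1 + 1) *
        v t ^ (-((α : ℤ) * p.1 + (β : ℤ) * p.2))) t ∧
      HasDerivAt v (-(1 / (β : ℝ)) * ∑ p ∈ S, b p * u t ^ p.1 *
        v t ^ (1 - ((α : ℤ) * p.1 + (β : ℤ) * p.2))) t := by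
  exact_mod_cast stmt_6_general (ι := ℤ × ℤ) (m := Prod.fst) (n := fun p ↦ (p.2 : ℝ))
    (Nat.cast_ne_zero.mpr hβ.ne') hIopen
    (fun _ _ _ p _ ↦ ⟨fun h ↦ ha _ p.2 (.inl h), fun h ↦ hb _ p.2 (.inl h)⟩) hypos
    (by exact_mod_cast hx) (by exact_mod_cast hy) hu hv
end

section
/- Let γ ⊆ ℤ² be a finite set, a, b : ℤ² → ℝ, and define P_γ(x,y) = Σ_{(m,n)∈γ} a_{m,n}·x^(m+1)·y^n and Q_γ(x,y) = Σ_{(m,n)∈γ} b_{m,n}·x^m·y^(n+1), as functions on (ℝ\{0})² using integer (zpow) powers. Assume that P_γ and Q_γ have no common zero in (ℝ\{0})², i.e. there is no (x,y) with x ≠ 0 and y ≠ 0 such that P_γ(x,y) = 0 and Q_γ(x,y) = 0. Let β₁ ∈ ℤ. Then for every ū ∈ ℝ\{0} satisfying Σ_{(m,n)∈γ} (b_{m,n} − β₁·a_{m,n})·ū^(n+1) = 0, one has Σ_{(m,n)∈γ} a_{m,n}·ū^n ≠ 0 (powers of ū being integer powers of a nonzero real). -/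
/-! On the line `x = 1` the sum `∑ (b - β a) u ^ (n + 1)` equals `Q(1, u) - β P(1, u) u`, where
`P(1, u) = ∑ a u ^ n`. At a zero `u ≠ 0` of that sum, `P(1, u) = 0` would therefore force
`Q(1, u) = 0`, making `(1, u)` a singularity of `(P, Q)`. -/

section DivisionRing

variable {ι K : Type*} [DivisionRing K] (s : Finset ι) (n : ι → ℤ) (a b : ι → K) (β : K)

theorem sum_sub_mul_mul_zpow_add_one {u : K} (hu : u ≠ 0) :
    ∑ i ∈ s, (b i - β * a i) * u ^ (n i + 1) =
      ∑ i ∈ s, b i * u ^ (n i + 1) - β * (∑ i ∈ s, a i * u ^ n i) * u := by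
  simp only [sub_mul, Finset.sum_sub_distrib, Finset.mul_sum, Finset.sum_mul, zpow_add_one₀ hu,
    mul_assoc]

theorem stmt_8_general
    (hnd : ¬ ∃ y : K, y ≠ 0 ∧ ∑ i ∈ s, a i * y ^ n i = 0 ∧ ∑ i ∈ s, b i * y ^ (n i + 1) = 0)
    {u : K} (hu : u ≠ 0) (hzero : ∑ i ∈ s, (b i - β * a i) * u ^ (n i + 1) = 0) :
    ∑ i ∈ s, a i * u ^ n i ≠ 0 := by
  intro hP
  have hQ : ∑ i ∈ s, b i * u ^ (n i + 1) = 0 := by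
    simpa only [sum_sub_mul_mul_zpow_add_one s n a b β hu, hP, mul_zero, zero_mul, sub_zero]
      using hzero
  exact hnd ⟨u, hu, hP, hQ⟩

end DivisionRing

/-- If the quasi-homogeneous component `X_γ = (P_γ, Q_γ)` (logarithmic basis,
coefficients `a, b` on a finite set `γ`) has no singularity in `(ℝ \ {0})²`, then at every
zero `ū ≠ 0` of `∑ (b - β₁ a) ū^(n+1)` one has `∑ a ū^n ≠ 0`. -/
theorem stmt_8 (γ : Finset (ℤ × ℤ)) (a b : ℤ × ℤ → ℝ) (β₁ : ℤ)
    (hnd : ¬ ∃ x y : ℝ, x ≠ 0 ∧ y ≠ 0 ∧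
      (∑ p ∈ γ, a p * x ^ (p.1 + 1) * y ^ p.2) = 0 ∧
      (∑ p ∈ γ, b p * x ^ p.1 * y ^ (p.2 + 1)) = 0) :
    ∀ u : ℝ, u ≠ 0 →
      (∑ p ∈ γ, (b p - (β₁ : ℝ) * a p) * u ^ (p.2 + 1)) = 0 →
      (∑ p ∈ γ, a p * u ^ p.2) ≠ 0 := fun _ hu hzero =>
  stmt_8_general γ Prod.snd a b β₁ (fun ⟨y, hy, hP, hQ⟩ =>
    hnd ⟨1, y, one_ne_zero, hy, by simpa using hP, by simpa using hQ⟩) hu hzero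
end

section
/- Let α and β be positive integers and let (Cs, Sn) : ℝ → ℝ × ℝ be the unique global solution of the Cauchy problem Cs' = −Sn^(2α−1), Sn' = Cs^(2β−1), Cs(0) = 1, Sn(0) = 0. Let P, Q : ℝ² → ℝ be functions whose only common zero is the origin, i.e. P(x,y) = 0 and Q(x,y) = 0 imply (x,y) = (0,0). Then for every θ ∈ ℝ satisfying Cs(θ)·Q(Cs(θ), Sn(θ)) − (β/α)·Sn(θ)·P(Cs(θ), Sn(θ)) = 0, one has Cs(θ)^(2β−1)·P(Cs(θ), Sn(θ)) + Sn(θ)^(2α−1)·Q(Cs(θ), Sn(θ)) ≠ 0. -/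
/-!
The system `x' = -y^(p-1)`, `y' = x^(q-1)` is Hamiltonian with `H(x, y) = x^q / q + y^p / p`, so a
solution starting off the level set `H = 0` never meets it. At a point `(x, y)`, the angular and
radial expressions `x v - (q / p) y u` and `x^(q-1) u + y^(p-1) v` are linear forms in `(u, v)`
whose determinant is `-q H(x, y)`. Off the level set `H = 0` they can therefore vanish together only
at `(u, v) = (0, 0)`.
-/

/-- The Hamiltonian `x^q / q + y^p / p` of the system `x' = -y^(p-1)`, `y' = x^(q-1)` defining the
quasi-homogeneous trigonometric functions. For `p = 2α` and `q = 2β` it is the classical first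
integral `β y^(2α) + α x^(2β)` divided by `2αβ`. -/
def trigHamiltonian {K : Type*} [Field K] (p q : ℕ) (x y : K) : K :=
  x ^ q / q + y ^ p / p

section Algebra

variable {K : Type*} [Field K] {p q : ℕ}

theorem trigHamiltonian_zero_zero (hp : p ≠ 0) (hq : q ≠ 0) :
    trigHamiltonian p q (0 : K) 0 = 0 := by
  simp [trigHamiltonian, hp, hq]

theorem det_angular_radial (hp : p ≠ 0) (hq : (q : K) ≠ 0) (x y : K) :
    !![-((q : K) / p * y), x; x ^ (q - 1), y ^ (p - 1)].det = -(q * trigHamiltonian p q x y) := by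
  have hq' : q ≠ 0 := fun h ↦ hq (by rw [h, Nat.cast_zero])
  calc
    _ = -((q : K) / p * (y * y ^ (p - 1)) + x * x ^ (q - 1)) := by
      rw [Matrix.det_fin_two_of]
      ring
    _ = -((q : K) / p * y ^ p + x ^ q) := by
      rw [mul_pow_sub_one hp, mul_pow_sub_one hq']
    _ = -(q * trigHamiltonian p q x y) := by
      rw [trigHamiltonian, mul_add, mul_div_cancel₀ _ hq]
      ring

theorem eq_zero_of_angular_eq_zero_of_radial_eq_zero (hp : p ≠ 0) (hq : (q : K) ≠ 0) {x y u v : K}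
    (hH : trigHamiltonian p q x y ≠ 0) (hangular : x * v - (q : K) / p * y * u = 0)
    (hradial : x ^ (q - 1) * u + y ^ (p - 1) * v = 0) : u = 0 ∧ v = 0 := by
  have hdet : !![-((q : K) / p * y), x; x ^ (q - 1), y ^ (p - 1)].det ≠ 0 := by
    rw [det_angular_radial hp hq]
    exact neg_ne_zero.mpr (mul_ne_zero hq hH)
  have huv : ![u, v] = 0 := by
    refine Matrix.eq_zero_of_mulVec_eq_zero hdet ?_
    ext i
    fin_cases i
    · simpa [sub_eq_neg_add, mul_comm] using hangular
    · simpa [mul_comm] using hradial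
  exact ⟨congrFun huv 0, congrFun huv 1⟩

end Algebra

theorem hasDerivAt_trigHamiltonian {𝕜 : Type*} [NontriviallyNormedField 𝕜] {p q : ℕ}
    (hp : (p : 𝕜) ≠ 0) (hq : (q : 𝕜) ≠ 0) {C S : 𝕜 → 𝕜} {c' s' t : 𝕜}
    (hC : HasDerivAt C c' t) (hS : HasDerivAt S s' t) :
    HasDerivAt (fun t ↦ trigHamiltonian p q (C t) (S t))
      (C t ^ (q - 1) * c' + S t ^ (p - 1) * s') t := by
  refine (((hC.fun_pow q).div_const (q : 𝕜)).fun_add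
    ((hS.fun_pow p).div_const (p : 𝕜))).congr_deriv ?_
  field_simp

section Flow

variable {𝕜 : Type*} [RCLike 𝕜] {p q : ℕ} {C S : 𝕜 → 𝕜} {D : Set 𝕜} {t₀ t : 𝕜}

theorem trigHamiltonian_conserved (hp : p ≠ 0) (hq : q ≠ 0)
    (hDopen : IsOpen D) (hDconn : IsPreconnected D)
    (hC : ∀ t ∈ D, HasDerivAt C (-S t ^ (p - 1)) t)
    (hS : ∀ t ∈ D, HasDerivAt S (C t ^ (q - 1)) t) (ht₀ : t₀ ∈ D) (ht : t ∈ D) :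
    trigHamiltonian p q (C t) (S t) = trigHamiltonian p q (C t₀) (S t₀) := by
  have hderiv : ∀ τ ∈ D, HasDerivAt (fun τ ↦ trigHamiltonian p q (C τ) (S τ)) 0 τ := fun τ hτ ↦
    (hasDerivAt_trigHamiltonian (Nat.cast_ne_zero.mpr hp) (Nat.cast_ne_zero.mpr hq)
      (hC τ hτ) (hS τ hτ)).congr_deriv (by ring)
  exact hDopen.is_const_of_deriv_eq_zero hDconn
    (fun τ hτ ↦ (hderiv τ hτ).differentiableAt.differentiableWithinAt)
    (fun τ hτ ↦ (hderiv τ hτ).deriv) ht ht₀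

-- The domain `D` leaves room for poles: for `p = q = 3` over `ℂ`, the solution with initial value
-- `(1, 0)` is the pair `(cm, sm)` of Dixon's elliptic functions.
theorem stmt_9_general (hp : p ≠ 0) (hq : q ≠ 0) (hDopen : IsOpen D) (hDconn : IsPreconnected D)
    (hC : ∀ t ∈ D, HasDerivAt C (-S t ^ (p - 1)) t)
    (hS : ∀ t ∈ D, HasDerivAt S (C t ^ (q - 1)) t)
    (ht₀ : t₀ ∈ D) (hH : trigHamiltonian p q (C t₀) (S t₀) ≠ 0) {P Q : 𝕜 → 𝕜 → 𝕜}
    (hPQ : ∀ x y : 𝕜, P x y = 0 → Q x y = 0 → x = 0 ∧ y = 0) (ht : t ∈ D)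
    (hangular : C t * Q (C t) (S t) - (q : 𝕜) / p * S t * P (C t) (S t) = 0) :
    C t ^ (q - 1) * P (C t) (S t) + S t ^ (p - 1) * Q (C t) (S t) ≠ 0 := by
  intro hradial
  have hHt : trigHamiltonian p q (C t) (S t) ≠ 0 := by
    rwa [trigHamiltonian_conserved hp hq hDopen hDconn hC hS ht₀ ht]
  obtain ⟨hP, hQ⟩ := eq_zero_of_angular_eq_zero_of_radial_eq_zero hp (Nat.cast_ne_zero.mpr hq)
    hHt hangular hradial
  obtain ⟨hCt, hSt⟩ := hPQ _ _ hP hQ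
  exact hHt (by rw [hCt, hSt, trigHamiltonian_zero_zero hp hq])

end Flow

/-- Let `(Cs, Sn)` be the (unique global) solution of the Cauchy problem
`Cs' = -Sn^(2α-1)`, `Sn' = Cs^(2β-1)`, `Cs 0 = 1`, `Sn 0 = 0`, and let `P, Q` have the origin
as only common zero. Then at every `θ` where
`Cs θ · Q(Cs θ, Sn θ) - (β/α) · Sn θ · P(Cs θ, Sn θ) = 0`, the radial eigenvalue quantity
`Cs θ^(2β-1) · P(Cs θ, Sn θ) + Sn θ^(2α-1) · Q(Cs θ, Sn θ)` is nonzero. -/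
theorem stmt_9 (α β : ℕ) (hα : 0 < α) (hβ : 0 < β) (Cs Sn : ℝ → ℝ)
    (hCs : ∀ θ : ℝ, HasDerivAt Cs (-(Sn θ) ^ (2 * α - 1)) θ)
    (hSn : ∀ θ : ℝ, HasDerivAt Sn ((Cs θ) ^ (2 * β - 1)) θ)
    (hCs0 : Cs 0 = 1) (hSn0 : Sn 0 = 0)
    (P Q : ℝ → ℝ → ℝ)
    (hPQ : ∀ x y : ℝ, P x y = 0 → Q x y = 0 → x = 0 ∧ y = 0) :
    ∀ θ : ℝ,
      Cs θ * Q (Cs θ) (Sn θ) - (β : ℝ) / (α : ℝ) * Sn θ * P (Cs θ) (Sn θ) = 0 →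
      Cs θ ^ (2 * β - 1) * P (Cs θ) (Sn θ) + Sn θ ^ (2 * α - 1) * Q (Cs θ) (Sn θ) ≠ 0 := by
  have hH : trigHamiltonian (2 * α) (2 * β) (Cs 0) (Sn 0) ≠ 0 := by
    simp [trigHamiltonian, hCs0, hSn0, hα.ne', hβ.ne']
  have hratio : ((2 * β : ℕ) : ℝ) / (2 * α : ℕ) = β / α := by simp [mul_div_mul_left]
  exact fun θ hangular ↦ stmt_9_general (by positivity) (by positivity) isOpen_univ
    isPreconnected_univ (fun t _ ↦ hCs t) (fun t _ ↦ hSn t) (Set.mem_univ 0) hH hPQ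
    (Set.mem_univ θ) (hratio ▸ hangular)
end

section
/- Let S ⊆ ℤ² be a finite nonempty set, let α, β be positive integers, and set δ = max_{(m,n)∈S} (α·m + β·n). Define the affine map T : ℝ² → ℝ² by T(m, n) = (m, δ − α·m − β·n). Let α', β' be positive integers with α·β' − β·α' > 0. Then T restricts to a bijection from the set F = {p ∈ conv(S) : α'·p₁ + β'·p₂ = max_{q∈conv(S)} (α'·q₁ + β'·q₂)} onto the set F' = {p ∈ conv(T(S)) : (α·β' − β·α')·p₁ + β'·p₂ = min_{q∈conv(T(S))} ((α·β' − β·α')·q₁ + β'·q₂)}; here conv denotes the convex hull in ℝ², and the linear functional defining F' has both coefficients strictly positive. -/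
/-!
Substituting `T`, the functional defining the new face becomes
`(αβ' - βα') (T q).1 + β' (T q).2 = β'δ - β (α' q.1 + β' q.2)`.
Since `β > 0`, the minimizers over `T (conv S)` are the images of the maximizers of
`α' q.1 + β' q.2` over `conv S`. As `T` is affine, `T (conv S) = conv (T S)`, and it is injective
because `β ≠ 0`.
-/

open Set

theorem image_setOf_isMaxOn_eq_setOf_isMinOn {X Y M N : Type*} [Preorder M] [Preorder N]
    {K : Set X} {φ : X → Y} {f : X → M} {g : Y → N}
    (hfg : ∀ p ∈ K, ∀ q ∈ K, g (φ p) ≤ g (φ q) ↔ f q ≤ f p) :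
    φ '' {p ∈ K | IsMaxOn f K p} = {p ∈ φ '' K | IsMinOn g (φ '' K) p} := by
  have hmem : ∀ p ∈ K, IsMaxOn f K p ↔ IsMinOn g (φ '' K) (φ p) := fun p hp => by
    simp only [isMaxOn_iff, isMinOn_iff, forall_mem_image]
    exact forall₂_congr fun q hq => (hfg p hp q hq).symm
  rw [sep_ext_iff.mpr hmem]
  exact image_inter_preimage φ K {y | IsMinOn g (φ '' K) y}

/-- The effect on exponents of the Poincaré–Lyapunov compactification `x = u v⁻ᵅ`, `y = v⁻ᵝ`
followed by multiplication by `v ^ δ`, as an affine self-map of the plane of exponents. The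
parameters are arbitrary scalars; `δ` need not be the top quasi-homogeneous level. -/
def exponentMap {𝕜 : Type*} [CommRing 𝕜] (α β δ : 𝕜) : 𝕜 × 𝕜 →ᵃ[𝕜] 𝕜 × 𝕜 :=
  AffineMap.fst.prod (AffineMap.const 𝕜 (𝕜 × 𝕜) δ - α • AffineMap.fst - β • AffineMap.snd)

section exponentMap

variable {𝕜 : Type*} [CommRing 𝕜]

theorem exponentMap_apply (α β δ : 𝕜) (p : 𝕜 × 𝕜) :
    exponentMap α β δ p = (p.1, δ - α * p.1 - β * p.2) := rfl

theorem exponentMap_injective {α β δ : 𝕜} (hβ : IsLeftRegular β) :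
    Function.Injective (exponentMap α β δ) := by
  intro p q h
  simp only [exponentMap_apply, Prod.mk.injEq] at h
  obtain ⟨hfst, hsnd⟩ := h
  rw [hfst, sub_right_inj] at hsnd
  exact Prod.ext hfst (hβ hsnd)

theorem functional_exponentMap (α β δ α' β' : 𝕜) (p : 𝕜 × 𝕜) :
    (α * β' - β * α') * (exponentMap α β δ p).1 + β' * (exponentMap α β δ p).2 =
      β' * δ - β * (α' * p.1 + β' * p.2) := by
  rw [exponentMap_apply]
  ring

variable [LinearOrder 𝕜] [IsStrictOrderedRing 𝕜]

theorem functional_exponentMap_le_iff {β : 𝕜} (hβ : 0 < β) (α δ α' β' : 𝕜) (p q : 𝕜 × 𝕜) :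
    (α * β' - β * α') * (exponentMap α β δ p).1 + β' * (exponentMap α β δ p).2 ≤
        (α * β' - β * α') * (exponentMap α β δ q).1 + β' * (exponentMap α β δ q).2 ↔
      α' * q.1 + β' * q.2 ≤ α' * p.1 + β' * p.2 := by
  rw [functional_exponentMap, functional_exponentMap, sub_le_sub_iff_left,
    mul_le_mul_iff_right₀ hβ]

theorem stmt_10_general (S : Set (𝕜 × 𝕜)) (α δ α' β' : 𝕜) {β : 𝕜} (hβ : 0 < β) :
    BijOn (exponentMap α β δ)
      {p ∈ convexHull 𝕜 S | IsMaxOn (fun q => α' * q.1 + β' * q.2) (convexHull 𝕜 S) p}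
      {p ∈ convexHull 𝕜 (exponentMap α β δ '' S) |
        IsMinOn (fun q => (α * β' - β * α') * q.1 + β' * q.2)
          (convexHull 𝕜 (exponentMap α β δ '' S)) p} := by
  rw [← AffineMap.image_convexHull, ← image_setOf_isMaxOn_eq_setOf_isMinOn
    fun p _ q _ => functional_exponentMap_le_iff hβ α δ α' β' p q]
  exact (exponentMap_injective (IsRegular.of_ne_zero hβ.ne').left).injOn.bijOn_image

end exponentMap

/-- Effect of the Poincaré–Lyapunov compactification in the positive
`y`-direction on the Newton polytope: the affine map `T(m,n) = (m, δ - αm - βn)` maps the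
face of `conv S` maximizing `α'm + β'n` (with `αβ' - βα' > 0`) bijectively onto the face of
`conv (T S)` minimizing `(αβ' - βα')m + β'n`, a linear functional with strictly positive
coefficients. -/
theorem stmt_10 (S : Finset (ℤ × ℤ)) (hS : S.Nonempty)
    (α β : ℕ) (hα : 0 < α) (hβ : 0 < β)
    (δ : ℤ) (hδ : δ = S.sup' hS (fun p => (α : ℤ) * p.1 + (β : ℤ) * p.2))
    (T : ℝ × ℝ → ℝ × ℝ)
    (hT : ∀ q : ℝ × ℝ, T q = (q.1, (δ : ℝ) - (α : ℝ) * q.1 - (β : ℝ) * q.2))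
    (α' β' : ℕ) (hα' : 0 < α') (hβ' : 0 < β')
    (hc : 0 < (α : ℤ) * (β' : ℤ) - (β : ℤ) * (α' : ℤ))
    (K K' F F' : Set (ℝ × ℝ))
    (hK : K = convexHull ℝ ((fun p : ℤ × ℤ => ((p.1 : ℝ), (p.2 : ℝ))) '' ↑S))
    (hK' : K' = convexHull ℝ ((fun p : ℤ × ℤ => T ((p.1 : ℝ), (p.2 : ℝ))) '' ↑S))
    (hF : F = {p ∈ K | ∀ q ∈ K,
      (α' : ℝ) * q.1 + (β' : ℝ) * q.2 ≤ (α' : ℝ) * p.1 + (β' : ℝ) * p.2})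
    (hF' : F' = {p ∈ K' | ∀ q ∈ K',
      ((α : ℝ) * (β' : ℝ) - (β : ℝ) * (α' : ℝ)) * p.1 + (β' : ℝ) * p.2 ≤
        ((α : ℝ) * (β' : ℝ) - (β : ℝ) * (α' : ℝ)) * q.1 + (β' : ℝ) * q.2}) :
    Set.BijOn T F F' ∧
      (0 < (α : ℝ) * (β' : ℝ) - (β : ℝ) * (α' : ℝ) ∧ (0 : ℝ) < (β' : ℝ)) := by
  obtain rfl : T = exponentMap (α : ℝ) β δ := funext hT
  subst hK hK' hF hF'
  refine ⟨?_, mod_cast hc, mod_cast hβ'⟩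
  simpa only [image_image, isMaxOn_iff, isMinOn_iff] using stmt_10_general
    ((fun p : ℤ × ℤ => ((p.1 : ℝ), (p.2 : ℝ))) '' ↑S) α δ α' β' (Nat.cast_pos.mpr hβ)
end

section
/- Let S ⊆ ℤ² be a finite nonempty set, let α, β be positive integers, and set δ = max_{(m,n)∈S} (α·m + β·n). Define the affine map R : ℝ² → ℝ² by R(m, n) = (n, δ − α·m − β·n). Let α', β' be positive integers with β·α' − α·β' > 0. Then R restricts to a bijection from the set F = {p ∈ conv(S) : α'·p₁ + β'·p₂ = max_{q∈conv(S)} (α'·q₁ + β'·q₂)} onto the set F' = {p ∈ conv(R(S)) : (α'·β − α·β')·p₁ + α'·p₂ = min_{q∈conv(R(S))} ((α'·β − α·β')·q₁ + α'·q₂)}; here conv denotes the convex hull in ℝ², and the linear functional defining F' has both coefficients strictly positive. -/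
/-!
The chart map `R` is affine, so it carries `conv S` onto `conv (R S)`. It is injective because
`α ≠ 0`. It turns the target functional into a decreasing function of the source functional:
`(α'β - αβ') (R p).1 + α' (R p).2 = α'δ - α (α' p.1 + β' p.2)`, since the terms
`± α'β p.2` cancel. Hence maximizers go to minimizers.
-/

open Set

theorem bijOn_sep_isMaxOn_sep_isMinOn_image {X Y A B : Type*} [Preorder A] [Preorder B]
    {f : X → A} {g : Y → B} {e : X → Y} {s : Set X} (he : InjOn e s)
    (hfg : ∀ p ∈ s, ∀ q ∈ s, g (e p) ≤ g (e q) ↔ f q ≤ f p) :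
    BijOn e {p ∈ s | IsMaxOn f s p} {p ∈ e '' s | IsMinOn g (e '' s) p} := by
  have isMinOn_image_iff {p : X} (hp : p ∈ s) : IsMinOn g (e '' s) (e p) ↔ IsMaxOn f s p := by
    rw [isMinOn_iff, isMaxOn_iff, forall_mem_image]
    exact forall₂_congr fun q hq => hfg p hp q hq
  refine ⟨fun p ⟨hp, hmax⟩ => ⟨mem_image_of_mem e hp, (isMinOn_image_iff hp).2 hmax⟩,
    he.mono (sep_subset _ _), ?_⟩
  rintro _ ⟨⟨p, hp, rfl⟩, hmin⟩
  exact ⟨p, ⟨hp, (isMinOn_image_iff hp).1 hmin⟩, rfl⟩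

section PoincareLyapunov

variable {𝕜 : Type*} [CommRing 𝕜]

/-- The `(a, b)`-quasi-homogeneous degree `a m + b n` of an exponent `(m, n)`, the linear functional
whose extrema cut out the faces of a Newton polytope. -/
def quasiDegree (a b : 𝕜) (p : 𝕜 × 𝕜) : 𝕜 :=
  a * p.1 + b * p.2

/-- The affine map `R (m, n) = (n, δ - α m - β n)` by which the Poincaré–Lyapunov
compactification in the positive `x`-direction acts on exponents, with the level `δ` as a free
parameter. -/
def poincareLyapunovMap (α β δ : 𝕜) : 𝕜 × 𝕜 →ᵃ[𝕜] 𝕜 × 𝕜 :=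
  AffineMap.snd.prod (AffineMap.const 𝕜 (𝕜 × 𝕜) δ - α • AffineMap.fst - β • AffineMap.snd)

@[simp]
theorem poincareLyapunovMap_apply (α β δ : 𝕜) (p : 𝕜 × 𝕜) :
    poincareLyapunovMap α β δ p = (p.2, δ - α * p.1 - β * p.2) :=
  rfl

theorem poincareLyapunovMap_injective [IsDomain 𝕜] {α : 𝕜} (hα : α ≠ 0) (β δ : 𝕜) :
    Function.Injective (poincareLyapunovMap α β δ) := by
  rintro ⟨m, n⟩ ⟨m', n'⟩ h
  obtain ⟨rfl, h⟩ : n = n' ∧ δ - α * m - β * n = δ - α * m' - β * n' := Prod.mk.inj h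
  have hm : α * m = α * m' := by linear_combination -h
  rw [mul_left_cancel₀ hα hm]

theorem quasiDegree_poincareLyapunovMap (α β δ a b : 𝕜) (p : 𝕜 × 𝕜) :
    quasiDegree (a * β - α * b) a (poincareLyapunovMap α β δ p) =
      a * δ - α * quasiDegree a b p := by
  simp only [quasiDegree, poincareLyapunovMap_apply]
  ring

variable [LinearOrder 𝕜] [IsStrictOrderedRing 𝕜]

theorem quasiDegree_poincareLyapunovMap_le_iff {α : 𝕜} (hα : 0 < α) (β δ a b : 𝕜)
    (p q : 𝕜 × 𝕜) :
    quasiDegree (a * β - α * b) a (poincareLyapunovMap α β δ p) ≤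
        quasiDegree (a * β - α * b) a (poincareLyapunovMap α β δ q) ↔
      quasiDegree a b q ≤ quasiDegree a b p := by
  rw [quasiDegree_poincareLyapunovMap, quasiDegree_poincareLyapunovMap, sub_le_sub_iff_left,
    mul_le_mul_iff_right₀ hα]

theorem stmt_12_general (S : Set (𝕜 × 𝕜)) {α : 𝕜} (hα : 0 < α) (β δ α' β' : 𝕜) :
    BijOn (poincareLyapunovMap α β δ)
      {p ∈ convexHull 𝕜 S | IsMaxOn (quasiDegree α' β') (convexHull 𝕜 S) p}
      {p ∈ convexHull 𝕜 (poincareLyapunovMap α β δ '' S) |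
        IsMinOn (quasiDegree (α' * β - α * β') α')
          (convexHull 𝕜 (poincareLyapunovMap α β δ '' S)) p} := by
  rw [← AffineMap.image_convexHull]
  exact bijOn_sep_isMaxOn_sep_isMinOn_image
    (poincareLyapunovMap_injective hα.ne' β δ).injOn
    fun p _ q _ => quasiDegree_poincareLyapunovMap_le_iff hα β δ α' β' p q

end PoincareLyapunov

/-- Effect of the Poincaré–Lyapunov compactification in the positive
`x`-direction on the Newton polytope: the affine map `R(m,n) = (n, δ - αm - βn)` maps the
face of `conv S` maximizing `α'm + β'n` (with `βα' - αβ' > 0`) bijectively onto the face of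
`conv (R S)` minimizing `(α'β - αβ')m + α'n`, a linear functional with strictly positive
coefficients. -/
theorem stmt_12 (S : Finset (ℤ × ℤ)) (hS : S.Nonempty)
    (α β : ℕ) (hα : 0 < α) (hβ : 0 < β)
    (δ : ℤ) (hδ : δ = S.sup' hS (fun p => (α : ℤ) * p.1 + (β : ℤ) * p.2))
    (R : ℝ × ℝ → ℝ × ℝ)
    (hR : ∀ q : ℝ × ℝ, R q = (q.2, (δ : ℝ) - (α : ℝ) * q.1 - (β : ℝ) * q.2))
    (α' β' : ℕ) (hα' : 0 < α') (hβ' : 0 < β')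
    (hc : 0 < (β : ℤ) * (α' : ℤ) - (α : ℤ) * (β' : ℤ))
    (K K' F F' : Set (ℝ × ℝ))
    (hK : K = convexHull ℝ ((fun p : ℤ × ℤ => ((p.1 : ℝ), (p.2 : ℝ))) '' ↑S))
    (hK' : K' = convexHull ℝ ((fun p : ℤ × ℤ => R ((p.1 : ℝ), (p.2 : ℝ))) '' ↑S))
    (hF : F = {p ∈ K | ∀ q ∈ K,
      (α' : ℝ) * q.1 + (β' : ℝ) * q.2 ≤ (α' : ℝ) * p.1 + (β' : ℝ) * p.2})
    (hF' : F' = {p ∈ K' | ∀ q ∈ K',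
      ((α' : ℝ) * (β : ℝ) - (α : ℝ) * (β' : ℝ)) * p.1 + (α' : ℝ) * p.2 ≤
        ((α' : ℝ) * (β : ℝ) - (α : ℝ) * (β' : ℝ)) * q.1 + (α' : ℝ) * q.2}) :
    Set.BijOn R F F' ∧
      (0 < (α' : ℝ) * (β : ℝ) - (α : ℝ) * (β' : ℝ) ∧ (0 : ℝ) < (α' : ℝ)) := by
  obtain rfl : R = poincareLyapunovMap (α : ℝ) β δ := funext hR
  subst hK hK' hF hF'
  refine ⟨?_, by rw [mul_comm (α' : ℝ)]; exact_mod_cast hc, Nat.cast_pos.2 hα'⟩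
  simpa only [image_image, isMaxOn_iff, isMinOn_iff, quasiDegree] using
    stmt_12_general ((fun p : ℤ × ℤ => ((p.1 : ℝ), (p.2 : ℝ))) '' ↑S) (Nat.cast_pos.2 hα) β δ α' β'
end

section
/- Let S ⊆ ℤ² be a finite nonempty set and a, b : ℤ² → ℝ with a_{m,n} = 0 whenever m < −1 or n ≤ −1, b_{m,n} = 0 whenever m ≤ −1 or n < −1, and S = {(m,n) : a_{m,n}² + b_{m,n}² ≠ 0}. Let P(x,y) = Σ_{(m,n)∈S} a_{m,n}·x^(m+1)·y^n and Q(x,y) = Σ_{(m,n)∈S} b_{m,n}·x^m·y^(n+1), and set M = max_{(m,n)∈S} (m+n). For λ ∈ ℝ define the polynomials P_λ(x,y) = P(x+λ·y, y) − λ·Q(x+λ·y, y) and Q_λ(x,y) = Q(x+λ·y, y), let a^λ, b^λ be the unique coefficient families with P_λ(x,y) = Σ a^λ_{m,n}·x^(m+1)·y^n and Q_λ(x,y) = Σ b^λ_{m,n}·x^m·y^(n+1) (subject to a^λ_{m,n} = 0 for m < −1 or n ≤ −1 and b^λ_{m,n} = 0 for m ≤ −1 or n < −1), and let S_λ = {(m,n)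 : (a^λ_{m,n})² + (b^λ_{m,n})² ≠ 0}. Then for all but finitely many λ ∈ ℝ: every (m,n) ∈ S_λ satisfies m + n ≤ M, and there exists (m*, n*) ∈ S_λ with m* ∈ {−1, 0}, m* + n* = M, and n* ≥ n for every (m,n) ∈ S_λ. -/
/-!
Write `d = M + 1` for the degree of the vector field and `P_d`, `Q_d` for the homogeneous parts of
degree `d`. A linear substitution preserves degree and commutes with taking homogeneous parts, and
the `y ^ d` coefficient of a polynomial is the value of its degree-`d` part at `(0, 1)`. Hence the
`y ^ d` coefficients of `P_λ` and `Q_λ`, which sit at the lattice points `(-1, M + 1)` and `(0, M)`,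
are `P_d(λ, 1) - λ Q_d(λ, 1)` and `Q_d(λ, 1)`. Both vanish only if `λ` is a common root of
`P_d(t, 1)` and `Q_d(t, 1)`, one of which is a nonzero polynomial in `t`.
-/

section LinearSubstitution

open MvPolynomial

variable {R σ τ : Type*} [CommSemiring R]

theorem homogeneousComponent_aeval_of_isHomogeneous_one {φ : σ → MvPolynomial τ R}
    (hφ : ∀ i, (φ i).IsHomogeneous 1) (n : ℕ) (f : MvPolynomial σ R) :
    homogeneousComponent n (aeval φ f) = aeval φ (homogeneousComponent n f) := by
  induction f using MvPolynomial.induction_on' with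
  | monomial s c =>
    have hs : (monomial s c).IsHomogeneous s.degree := isHomogeneous_monomial c rfl
    have haeval : (aeval φ (monomial s c)).IsHomogeneous s.degree := by
      simpa only [one_mul] using hs.aeval φ hφ
    rw [homogeneousComponent_of_mem hs, homogeneousComponent_of_mem haeval]
    split_ifs
    · rfl
    · rw [map_zero]
  | add f g hf hg => simp only [map_add, hf, hg]

theorem totalDegree_aeval_le_of_isHomogeneous_one {φ : σ → MvPolynomial τ R}
    (hφ : ∀ i, (φ i).IsHomogeneous 1) (f : MvPolynomial σ R) :
    (aeval φ f).totalDegree ≤ f.totalDegree := by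
  rw [totalDegree, Finset.sup_le_iff]
  intro s hs
  by_contra hle
  have hlt : f.totalDegree < s.degree := not_le.mp hle
  have hzero : homogeneousComponent s.degree (aeval φ f) = 0 := by
    rw [homogeneousComponent_aeval_of_isHomogeneous_one hφ,
      homogeneousComponent_eq_zero _ _ hlt, map_zero]
  have hcoeff := coeff_homogeneousComponent s.degree (aeval φ f) s
  rw [hzero, coeff_zero, if_pos rfl] at hcoeff
  exact mem_support_iff.mp hs hcoeff.symm

theorem coeff_single_eq_eval_homogeneousComponent [DecidableEq σ] (i : σ) (n : ℕ)
    (f : MvPolynomial σ R) :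
    coeff (Finsupp.single i n) f = eval (Pi.single i 1) (homogeneousComponent n f) := by
  symm
  have hhom := homogeneousComponent_isHomogeneous n f
  rw [eval_eq, Finset.sum_eq_single (Finsupp.single i n)]
  · rw [coeff_homogeneousComponent, if_pos (Finsupp.degree_single i n), Finset.prod_eq_one, mul_one]
    intro j hj
    obtain rfl := Finset.mem_singleton.mp (Finsupp.support_single_subset hj)
    rw [Pi.single_eq_same, one_pow]
  · intro s hs hne
    obtain ⟨j, hj, hji⟩ : ∃ j ∈ s.support, j ≠ i := by
      by_contra! hsupp
      have hsingle : s = Finsupp.single i (s i) :=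
        Finsupp.support_subset_singleton.mp fun j hj => Finset.mem_singleton.mpr (hsupp j hj)
      have hdeg : s.degree = n :=
        not_imp_comm.mp hhom.coeff_eq_zero (mem_support_iff.mp hs)
      rw [hsingle, Finsupp.degree_single] at hdeg
      exact hne (hdeg ▸ hsingle)
    rw [Finset.prod_eq_zero hj, mul_zero]
    rw [Pi.single_eq_of_ne hji, zero_pow (Finsupp.mem_support_iff.mp hj)]
  · intro hns
    rw [notMem_support_iff.mp hns, zero_mul]

end LinearSubstitution

section Shear

open MvPolynomial

variable {R : Type*} [CommSemiring R]

/-- The substitution `f(x, y) ↦ f(x + t * y, y)` on polynomials in `x = X 0` and `y = X 1`, which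
expresses a polynomial in the coordinates `x - t * y`, `y`. -/
noncomputable def shear (t : R) : MvPolynomial (Fin 2) R →ₐ[R] MvPolynomial (Fin 2) R :=
  aeval ![X 0 + C t * X 1, X 1]

theorem isHomogeneous_shear_X (t : R) (i : Fin 2) :
    ((![X 0 + C t * X 1, X 1] : Fin 2 → MvPolynomial (Fin 2) R) i).IsHomogeneous 1 := by
  fin_cases i
  · exact (isHomogeneous_X R 0).add (isHomogeneous_C_mul_X t 1)
  · exact isHomogeneous_X R 1

theorem eval_shear (t x y : R) (f : MvPolynomial (Fin 2) R) :
    eval ![x, y] (shear t f) = eval ![x + t * y, y] f := by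
  induction f using MvPolynomial.induction_on with
  | C c => simp [shear]
  | add f g hf hg => simp only [map_add, hf, hg]
  | mul_X f i hf =>
    rw [map_mul, map_mul, map_mul, hf]
    congr 1
    fin_cases i <;> simp [shear]

theorem totalDegree_shear_le (t : R) (f : MvPolynomial (Fin 2) R) :
    (shear t f).totalDegree ≤ f.totalDegree :=
  totalDegree_aeval_le_of_isHomogeneous_one (isHomogeneous_shear_X t) f

theorem coeff_single_one_shear (t : R) (n : ℕ) (f : MvPolynomial (Fin 2) R) :
    coeff (Finsupp.single 1 n) (shear t f) = eval ![t, 1] (homogeneousComponent n f) := by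
  have hpoint : (Pi.single 1 1 : Fin 2 → R) = ![0, 1] := by
    ext i; fin_cases i <;> simp
  rw [coeff_single_eq_eval_homogeneousComponent, shear,
    homogeneousComponent_aeval_of_isHomogeneous_one (isHomogeneous_shear_X t), ← shear, hpoint,
    eval_shear, zero_add, mul_one]

theorem coeff_aeval_X_one {n : ℕ} {f : MvPolynomial (Fin 2) R} (hf : f.IsHomogeneous n)
    {s : Fin 2 →₀ ℕ} (hs : s.degree = n) :
    (aeval ![Polynomial.X, 1] f).coeff (s 0) = coeff s f := by
  have hexpand : aeval ![Polynomial.X, 1] f =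
      ∑ u ∈ f.support, Polynomial.C (coeff u f) * Polynomial.X ^ u 0 := by
    rw [aeval_def, eval₂_eq']
    simp
  rw [hexpand, Polynomial.finsetSum_coeff, Finset.sum_eq_single s]
  · rw [Polynomial.coeff_C_mul_X_pow, if_pos rfl]
  · intro u hu hus
    rw [Polynomial.coeff_C_mul_X_pow, if_neg]
    intro h₀
    have hdeg : u.degree = s.degree :=
      hs ▸ not_imp_comm.mp hf.coeff_eq_zero (mem_support_iff.mp hu)
    simp only [Finsupp.degree_eq_sum, Fin.sum_univ_two] at hdeg
    rw [h₀] at hdeg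
    apply hus
    ext i
    fin_cases i
    · exact h₀.symm
    · exact add_left_cancel hdeg
  · intro hns
    rw [notMem_support_iff.mp hns, map_zero, zero_mul, Polynomial.coeff_zero]

theorem eval_aeval_X_one (t : R) (f : MvPolynomial (Fin 2) R) :
    (aeval ![Polynomial.X, 1] f).eval t = eval ![t, 1] f := by
  induction f using MvPolynomial.induction_on with
  | C c => simp
  | add f g hf hg => simp only [map_add, Polynomial.eval_add, hf, hg]
  | mul_X f i hf =>
    rw [map_mul, map_mul, Polynomial.eval_mul, hf, aeval_X, eval_X]
    fin_cases i <;> simp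

end Shear

section ShearRing

open MvPolynomial

variable {R : Type*} [CommRing R]

theorem finite_setOf_eval_eq_zero_of_isHomogeneous [IsDomain R] {n : ℕ}
    {f : MvPolynomial (Fin 2) R}
    (hf : f.IsHomogeneous n) (hf₀ : f ≠ 0) :
    {t : R | eval ![t, 1] f = 0}.Finite := by
  obtain ⟨s, hs⟩ := exists_coeff_ne_zero hf₀
  have hdeg : s.degree = n := not_imp_comm.mp hf.coeff_eq_zero hs
  have hdehom : (aeval ![Polynomial.X, 1] f : Polynomial R) ≠ 0 := by
    intro h
    rw [← coeff_aeval_X_one hf hdeg, h, Polynomial.coeff_zero] at hs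
    exact hs rfl
  convert Polynomial.finite_setOfPred_isRoot hdehom using 2
  ext t
  rw [Polynomial.IsRoot, eval_aeval_X_one]

theorem totalDegree_shear_sub_C_mul_shear_le {d : ℕ} {f g : MvPolynomial (Fin 2) R}
    (hf : f.totalDegree ≤ d) (hg : g.totalDegree ≤ d) (t : R) :
    (shear t f - C t * shear t g).totalDegree ≤ d := by
  refine (totalDegree_sub _ _).trans (max_le ((totalDegree_shear_le t f).trans hf) ?_)
  rw [← smul_eq_C_mul]
  exact (totalDegree_smul_le _ _).trans ((totalDegree_shear_le t g).trans hg)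

theorem finite_setOf_coeff_single_one_shear_eq_zero [IsDomain R] {n : ℕ}
    {f g : MvPolynomial (Fin 2) R}
    (h : homogeneousComponent n f ≠ 0 ∨ homogeneousComponent n g ≠ 0) :
    {t : R | coeff (Finsupp.single 1 n) (shear t f - C t * shear t g) = 0 ∧
      coeff (Finsupp.single 1 n) (shear t g) = 0}.Finite := by
  simp only [coeff_sub, coeff_C_mul, coeff_single_one_shear]
  rcases h with hf | hg
  · have hfin := finite_setOf_eval_eq_zero_of_isHomogeneous
      (homogeneousComponent_isHomogeneous n f) hf
    refine hfin.subset ?_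
    rintro t ⟨hft, hgt⟩
    rwa [hgt, mul_zero, sub_zero] at hft
  · have hfin := finite_setOf_eval_eq_zero_of_isHomogeneous
      (homogeneousComponent_isHomogeneous n g) hg
    exact hfin.subset fun t ht => ht.2

theorem eq_of_forall_eval_pair_eq [IsDomain R] [Infinite R] {f g : MvPolynomial (Fin 2) R}
    (h : ∀ x y : R, eval ![x, y] f = eval ![x, y] g) : f = g :=
  MvPolynomial.funext fun v => by
    convert h (v 0) (v 1) using 2 <;> exact congrArg eval (List.ofFn_inj.mp rfl)

end ShearRing

section LogPolynomial

open MvPolynomial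

/-- The exponent vector of `x ^ q.1 * y ^ q.2`; negative exponents are truncated to `0`. -/
noncomputable def toExponent (q : ℤ × ℤ) : Fin 2 →₀ ℕ :=
  Finsupp.single 0 q.1.toNat + Finsupp.single 1 q.2.toNat

theorem toExponent_fst {q : ℤ × ℤ} (hq : 0 ≤ q.1) : (toExponent q 0 : ℤ) = q.1 := by
  simp [toExponent, hq]

theorem toExponent_snd {q : ℤ × ℤ} (hq : 0 ≤ q.2) : (toExponent q 1 : ℤ) = q.2 := by
  simp [toExponent, hq]

theorem toExponent_injOn : Set.InjOn toExponent (Set.Ici 0) := by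
  rintro q ⟨hq₁, hq₂⟩ r ⟨hr₁, hr₂⟩ h
  apply Prod.ext
  · rw [← toExponent_fst hq₁, h, toExponent_fst hr₁]
  · rw [← toExponent_snd hq₂, h, toExponent_snd hr₂]

theorem degree_toExponent {q : ℤ × ℤ} (hq : 0 ≤ q) : ((toExponent q).degree : ℤ) = q.1 + q.2 := by
  rw [Finsupp.degree_eq_sum, Fin.sum_univ_two, Nat.cast_add, toExponent_fst hq.1,
    toExponent_snd hq.2]

/-- The polynomial `∑ c_{m,n} x ^ (m + i) * y ^ (n + j)` over `(m, n) ∈ S`, where `e = (i, j)`. The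
components `P` and `Q` of a vector field in the logarithmic basis are of this form with
`e = (1, 0)` and `e = (0, 1)`. -/
noncomputable def logPolynomial {R : Type*} [CommSemiring R] (S : Finset (ℤ × ℤ)) (c : ℤ × ℤ → R)
    (e : ℤ × ℤ) : MvPolynomial (Fin 2) R :=
  ∑ p ∈ S, monomial (toExponent (p + e)) (c p)

theorem eval_logPolynomial {K : Type*} [Semifield K] {S : Finset (ℤ × ℤ)} {c : ℤ × ℤ → K}
    {e : ℤ × ℤ} (hc : ∀ p, c p ≠ 0 → 0 ≤ p + e) (x y : K) :
    eval ![x, y] (logPolynomial S c e) =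
      ∑ p ∈ S, c p * x ^ (p.1 + e.1) * y ^ (p.2 + e.2) := by
  rw [logPolynomial, map_sum]
  refine Finset.sum_congr rfl fun p _ => ?_
  by_cases hp : c p = 0
  · simp only [hp, map_zero, zero_mul]
  · obtain ⟨h₁, h₂⟩ := hc p hp
    have hx : x ^ (toExponent (p + e) 0) = x ^ (p.1 + e.1) := by
      rw [← zpow_natCast, toExponent_fst h₁, Prod.fst_add]
    have hy : y ^ (toExponent (p + e) 1) = y ^ (p.2 + e.2) := by
      rw [← zpow_natCast, toExponent_snd h₂, Prod.snd_add]
    simp [monomial_fin_two, hx, hy]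

variable {R : Type*} [CommSemiring R] {S : Finset (ℤ × ℤ)} {c : ℤ × ℤ → R} {e : ℤ × ℤ}

theorem coeff_logPolynomial (hS : ∀ p, c p ≠ 0 → p ∈ S) (hc : ∀ p, c p ≠ 0 → 0 ≤ p + e)
    {p : ℤ × ℤ} (hp : 0 ≤ p + e) : coeff (toExponent (p + e)) (logPolynomial S c e) = c p := by
  rw [logPolynomial, coeff_sum, Finset.sum_eq_single p]
  · rw [coeff_monomial, if_pos rfl]
  · intro q _ hqp
    rw [coeff_monomial, ite_eq_right_iff]
    intro hexp
    by_contra hq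
    exact hqp (add_right_cancel (toExponent_injOn (hc q hq) hp hexp))
  · intro hpS
    rw [coeff_monomial, if_pos rfl]
    exact not_imp_comm.mp (hS p) hpS

theorem totalDegree_logPolynomial_le_iff (hS : ∀ p, c p ≠ 0 → p ∈ S)
    (hc : ∀ p, c p ≠ 0 → 0 ≤ p + e) {d : ℕ} :
    (logPolynomial S c e).totalDegree ≤ d ↔ ∀ p, c p ≠ 0 → (p + e).1 + (p + e).2 ≤ d := by
  constructor
  · intro h p hp
    have hmem : toExponent (p + e) ∈ (logPolynomial S c e).support := by
      rwa [mem_support_iff, coeff_logPolynomial hS hc (hc p hp)]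
    rw [← degree_toExponent (hc p hp)]
    exact_mod_cast (le_totalDegree hmem).trans h
  · intro h
    refine totalDegree_finsetSum_le fun p _ => ?_
    by_cases hp : c p = 0
    · simp only [hp, map_zero, totalDegree_zero, zero_le]
    · refine (totalDegree_monomial_le _ _).trans ?_
      have hdeg := degree_toExponent (hc p hp) ▸ h p hp
      exact_mod_cast hdeg

theorem homogeneousComponent_logPolynomial_ne_zero (hS : ∀ p, c p ≠ 0 → p ∈ S)
    (hc : ∀ p, c p ≠ 0 → 0 ≤ p + e) {d : ℕ} {p : ℤ × ℤ} (hp : c p ≠ 0)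
    (hpd : (p + e).1 + (p + e).2 = d) : homogeneousComponent d (logPolynomial S c e) ≠ 0 := by
  intro h
  have hdeg : (toExponent (p + e)).degree = d := by
    exact_mod_cast (degree_toExponent (hc p hp)).trans hpd
  have hcoeff := coeff_homogeneousComponent d (logPolynomial S c e) (toExponent (p + e))
  rw [h, coeff_zero, if_pos hdeg, coeff_logPolynomial hS hc (hc p hp)] at hcoeff
  exact hp hcoeff.symm

theorem coeff_single_one_logPolynomial (hS : ∀ p, c p ≠ 0 → p ∈ S)
    (hc : ∀ p, c p ≠ 0 → 0 ≤ p + e) {d : ℕ} {p : ℤ × ℤ} (hp : p + e = (0, (d : ℤ))) :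
    coeff (Finsupp.single 1 d) (logPolynomial S c e) = c p := by
  rw [← coeff_logPolynomial hS hc (hp ▸ ⟨le_rfl, Int.natCast_nonneg d⟩), hp]
  simp [toExponent]

end LogPolynomial

/-- `a` and `b` are the coefficient families, in the logarithmic basis, of a polynomial vector
field with support `S`: the field is the sum of `x ^ m * y ^ n * (a_{m,n} x ∂/∂x + b_{m,n} y ∂/∂y)`
over `(m, n) ∈ S`. Over the reals `mem_iff` says `(m, n) ∈ S ↔ a_{m,n} ^ 2 + b_{m,n} ^ 2 ≠ 0`. -/
structure IsLogVectorField {R : Type*} [Zero R] (S : Finset (ℤ × ℤ)) (a b : ℤ × ℤ → R) : Prop where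
  a_eq_zero : ∀ m n : ℤ, m < -1 ∨ n ≤ -1 → a (m, n) = 0
  b_eq_zero : ∀ m n : ℤ, m ≤ -1 ∨ n < -1 → b (m, n) = 0
  mem_iff : ∀ p, p ∈ S ↔ a p ≠ 0 ∨ b p ≠ 0

namespace IsLogVectorField

section Support

variable {R : Type*} [Zero R] {S : Finset (ℤ × ℤ)} {a b : ℤ × ℤ → R}

theorem mem_of_a_ne_zero (h : IsLogVectorField S a b) (p : ℤ × ℤ) (hp : a p ≠ 0) : p ∈ S :=
  (h.mem_iff p).mpr (.inl hp)

theorem mem_of_b_ne_zero (h : IsLogVectorField S a b) (p : ℤ × ℤ) (hp : b p ≠ 0) : p ∈ S :=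
  (h.mem_iff p).mpr (.inr hp)

theorem nonneg_of_a_ne_zero (h : IsLogVectorField S a b) (p : ℤ × ℤ) (hp : a p ≠ 0) :
    0 ≤ p + (1, 0) := by
  have hbound := not_imp_not.mpr (h.a_eq_zero p.1 p.2) hp
  simp only [Prod.le_def, Prod.fst_add, Prod.snd_add, Prod.fst_zero, Prod.snd_zero]
  omega

theorem nonneg_of_b_ne_zero (h : IsLogVectorField S a b) (p : ℤ × ℤ) (hp : b p ≠ 0) :
    0 ≤ p + (0, 1) := by
  have hbound := not_imp_not.mpr (h.b_eq_zero p.1 p.2) hp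
  simp only [Prod.le_def, Prod.fst_add, Prod.snd_add, Prod.fst_zero, Prod.snd_zero]
  omega

theorem neg_one_le_fst (h : IsLogVectorField S a b) {p : ℤ × ℤ} (hp : p ∈ S) : -1 ≤ p.1 := by
  rcases (h.mem_iff p).mp hp with hpa | hpb
  · have hnonneg : 0 ≤ p.1 + 1 := (h.nonneg_of_a_ne_zero p hpa).1
    omega
  · have hnonneg : 0 ≤ p.1 + 0 := (h.nonneg_of_b_ne_zero p hpb).1
    omega

theorem neg_one_le_add (h : IsLogVectorField S a b) {p : ℤ × ℤ} (hp : p ∈ S) :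
    -1 ≤ p.1 + p.2 := by
  rcases (h.mem_iff p).mp hp with hpa | hpb
  · obtain ⟨h₁, h₂⟩ : 0 ≤ p.1 + 1 ∧ 0 ≤ p.2 + 0 := h.nonneg_of_a_ne_zero p hpa
    omega
  · obtain ⟨h₁, h₂⟩ : 0 ≤ p.1 + 0 ∧ 0 ≤ p.2 + 1 := h.nonneg_of_b_ne_zero p hpb
    omega

theorem exists_upper_vertex (h : IsLogVectorField S a b) {M : ℤ} (hM : ∀ p ∈ S, p.1 + p.2 ≤ M)
    (hab : a (-1, M + 1) ≠ 0 ∨ b (0, M) ≠ 0) :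
    ∃ p' ∈ S, (p'.1 = -1 ∨ p'.1 = 0) ∧ p'.1 + p'.2 = M ∧ ∀ p ∈ S, p.2 ≤ p'.2 := by
  by_cases hmem : (-1, M + 1) ∈ S
  · refine ⟨_, hmem, .inl rfl, by simp, fun p hp => ?_⟩
    have hp₁ := h.neg_one_le_fst hp
    have hpM := hM p hp
    simp only
    omega
  · have hb : b (0, M) ≠ 0 := hab.resolve_left fun ha => hmem (h.mem_of_a_ne_zero _ ha)
    refine ⟨_, h.mem_of_b_ne_zero _ hb, .inr rfl, by simp, fun p hp => ?_⟩
    have hp₁ := h.neg_one_le_fst hp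
    have hpM := hM p hp
    by_contra! hlt
    simp only at hlt
    have hp_fst : p.1 = -1 := by omega
    have hp_snd : p.2 = M + 1 := by omega
    have hp_eq : p = (-1, M + 1) := Prod.ext hp_fst hp_snd
    exact hmem (hp_eq ▸ hp)

end Support

section Components

open MvPolynomial

variable {R : Type*} [CommSemiring R] {S : Finset (ℤ × ℤ)} {a b : ℤ × ℤ → R}

theorem forall_add_le_iff_totalDegree_le (h : IsLogVectorField S a b) {d : ℕ} :
    (∀ p ∈ S, p.1 + p.2 + 1 ≤ d) ↔ (logPolynomial S a (1, 0)).totalDegree ≤ d ∧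
      (logPolynomial S b (0, 1)).totalDegree ≤ d := by
  rw [totalDegree_logPolynomial_le_iff h.mem_of_a_ne_zero h.nonneg_of_a_ne_zero,
    totalDegree_logPolynomial_le_iff h.mem_of_b_ne_zero h.nonneg_of_b_ne_zero]
  simp only [h.mem_iff, or_imp, forall_and, Prod.fst_add, Prod.snd_add, add_zero, add_right_comm,
    add_assoc]

theorem homogeneousComponent_ne_zero (h : IsLogVectorField S a b) {d : ℕ} {p : ℤ × ℤ} (hp : p ∈ S)
    (hpd : p.1 + p.2 + 1 = d) : homogeneousComponent d (logPolynomial S a (1, 0)) ≠ 0 ∨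
      homogeneousComponent d (logPolynomial S b (0, 1)) ≠ 0 := by
  refine ((h.mem_iff p).mp hp).imp (fun ha => ?_) fun hb => ?_
  · refine homogeneousComponent_logPolynomial_ne_zero h.mem_of_a_ne_zero h.nonneg_of_a_ne_zero ha ?_
    rw [Prod.fst_add, Prod.snd_add]
    omega
  · refine homogeneousComponent_logPolynomial_ne_zero h.mem_of_b_ne_zero h.nonneg_of_b_ne_zero hb ?_
    rw [Prod.fst_add, Prod.snd_add]
    omega

theorem exists_degree (h : IsLogVectorField S a b) (hS : S.Nonempty) {M : ℤ}
    (hM : M = S.sup' hS fun p => p.1 + p.2) :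
    ∃ d : ℕ, M + 1 = d ∧ (logPolynomial S a (1, 0)).totalDegree ≤ d ∧
      (logPolynomial S b (0, 1)).totalDegree ≤ d ∧
      (homogeneousComponent d (logPolynomial S a (1, 0)) ≠ 0 ∨
        homogeneousComponent d (logPolynomial S b (0, 1)) ≠ 0) := by
  obtain ⟨q, hqS, hqM⟩ := S.exists_mem_eq_sup' hS fun p => p.1 + p.2
  rw [← hM] at hqM
  have hnonneg : 0 ≤ M + 1 := by linarith [h.neg_one_le_add hqS]
  obtain ⟨d, hd⟩ := Int.eq_ofNat_of_zero_le hnonneg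
  have hle : ∀ p ∈ S, p.1 + p.2 + 1 ≤ d := fun p hp => by
    rw [← hd, hM]
    exact Int.add_le_add_right (S.le_sup' (fun p => p.1 + p.2) hp) 1
  obtain ⟨hdegP, hdegQ⟩ := h.forall_add_le_iff_totalDegree_le.mp hle
  exact ⟨d, hd, hdegP, hdegQ, h.homogeneousComponent_ne_zero hqS (by rw [← hqM, hd])⟩

theorem exists_upper_vertex_of_coeff_ne_zero (h : IsLogVectorField S a b) {d : ℕ} {M : ℤ}
    (hd : M + 1 = d) (hdegP : (logPolynomial S a (1, 0)).totalDegree ≤ d)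
    (hdegQ : (logPolynomial S b (0, 1)).totalDegree ≤ d)
    (hcoeff : coeff (Finsupp.single 1 d) (logPolynomial S a (1, 0)) ≠ 0 ∨
      coeff (Finsupp.single 1 d) (logPolynomial S b (0, 1)) ≠ 0) :
    (∀ p ∈ S, p.1 + p.2 ≤ M) ∧
      ∃ p' ∈ S, (p'.1 = -1 ∨ p'.1 = 0) ∧ p'.1 + p'.2 = M ∧ ∀ p ∈ S, p.2 ≤ p'.2 := by
  have hle : ∀ p ∈ S, p.1 + p.2 ≤ M := fun p hp => by
    linarith [h.forall_add_le_iff_totalDegree_le.mpr ⟨hdegP, hdegQ⟩ p hp]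
  rw [coeff_single_one_logPolynomial (p := (-1, M + 1)) h.mem_of_a_ne_zero h.nonneg_of_a_ne_zero
      (by simp [hd]),
    coeff_single_one_logPolynomial (p := (0, M)) h.mem_of_b_ne_zero h.nonneg_of_b_ne_zero
      (by simp [hd])] at hcoeff
  exact ⟨hle, h.exists_upper_vertex hle hcoeff⟩

end Components

section Eval

open MvPolynomial

variable {K : Type*} [Semifield K] {S : Finset (ℤ × ℤ)} {a b : ℤ × ℤ → K}

theorem eval_logPolynomial_a (h : IsLogVectorField S a b) (x y : K) :
    eval ![x, y] (logPolynomial S a (1, 0)) = ∑ p ∈ S, a p * x ^ (p.1 + 1) * y ^ p.2 := by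
  simpa only [add_zero] using eval_logPolynomial h.nonneg_of_a_ne_zero x y

theorem eval_logPolynomial_b (h : IsLogVectorField S a b) (x y : K) :
    eval ![x, y] (logPolynomial S b (0, 1)) = ∑ p ∈ S, b p * x ^ p.1 * y ^ (p.2 + 1) := by
  simpa only [add_zero] using eval_logPolynomial h.nonneg_of_b_ne_zero x y

end Eval

end IsLogVectorField

theorem isLogVectorField_iff_sq {R : Type*} [Ring R] [LinearOrder R] [IsStrictOrderedRing R]
    {S : Finset (ℤ × ℤ)} {a b : ℤ × ℤ → R} :
    IsLogVectorField S a b ↔ (∀ m n : ℤ, m < -1 ∨ n ≤ -1 → a (m, n) = 0) ∧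
      (∀ m n : ℤ, m ≤ -1 ∨ n < -1 → b (m, n) = 0) ∧ ∀ p, p ∈ S ↔ a p ^ 2 + b p ^ 2 ≠ 0 := by
  have hsq (p : ℤ × ℤ) : a p ^ 2 + b p ^ 2 ≠ 0 ↔ a p ≠ 0 ∨ b p ≠ 0 := by
    rw [Ne, add_eq_zero_iff_of_nonneg (sq_nonneg _) (sq_nonneg _), sq_eq_zero_iff, sq_eq_zero_iff,
      not_and_or]
  simp only [hsq]
  exact ⟨fun ⟨ha, hb, hS⟩ => ⟨ha, hb, hS⟩, fun ⟨ha, hb, hS⟩ => ⟨ha, hb, hS⟩⟩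

theorem stmt_13_general {K : Type*} [Field K] [Infinite K] {S : Finset (ℤ × ℤ)} (hS : S.Nonempty)
    {a b : ℤ × ℤ → K} (h : IsLogVectorField S a b)
    {M : ℤ} (hM : M = S.sup' hS (fun p => p.1 + p.2)) {P Q : K → K → K}
    (hP : ∀ x y : K, P x y = ∑ p ∈ S, a p * x ^ (p.1 + 1) * y ^ p.2)
    (hQ : ∀ x y : K, Q x y = ∑ p ∈ S, b p * x ^ p.1 * y ^ (p.2 + 1)) :
    {lam : K | ¬ ∀ (S' : Finset (ℤ × ℤ)) (a' b' : ℤ × ℤ → K), IsLogVectorField S' a' b' →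
      (∀ x y : K, P (x + lam * y) y - lam * Q (x + lam * y) y =
        ∑ p ∈ S', a' p * x ^ (p.1 + 1) * y ^ p.2) →
      (∀ x y : K, Q (x + lam * y) y = ∑ p ∈ S', b' p * x ^ p.1 * y ^ (p.2 + 1)) →
      ((∀ p ∈ S', p.1 + p.2 ≤ M) ∧
        ∃ p' ∈ S', (p'.1 = -1 ∨ p'.1 = 0) ∧ p'.1 + p'.2 = M ∧
          ∀ p ∈ S', p.2 ≤ p'.2)}.Finite := by
  obtain ⟨d, hd, hdegP, hdegQ, htop⟩ := h.exists_degree hS hM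
  refine (finite_setOf_coeff_single_one_shear_eq_zero htop).subset fun t ht => ?_
  by_contra hcoeff
  refine ht fun S' a' b' h' hPt hQt => ?_
  have hP' : logPolynomial S' a' (1, 0) = shear t (logPolynomial S a (1, 0)) -
      MvPolynomial.C t * shear t (logPolynomial S b (0, 1)) :=
    eq_of_forall_eval_pair_eq fun x y => by
      rw [map_sub, map_mul, MvPolynomial.eval_C, eval_shear, eval_shear, h.eval_logPolynomial_a,
        h.eval_logPolynomial_b, h'.eval_logPolynomial_a, ← hP, ← hQ, hPt]
  have hQ' : logPolynomial S' b' (0, 1) = shear t (logPolynomial S b (0, 1)) :=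
    eq_of_forall_eval_pair_eq fun x y => by
      rw [eval_shear, h.eval_logPolynomial_b, h'.eval_logPolynomial_b, ← hQ, hQt]
  apply h'.exists_upper_vertex_of_coeff_ne_zero hd
  · exact hP' ▸ totalDegree_shear_sub_C_mul_shear_le hdegP hdegQ t
  · exact hQ' ▸ (totalDegree_shear_le t _).trans hdegQ
  · rw [hP', hQ']
    exact not_and_or.mp hcoeff

/-- After the linear change of coordinates `x̃ = x - λy`, `ỹ = y`, for all but
finitely many `λ` the support `S_λ` of the transformed vector field (logarithmic basis)
satisfies `m + n ≤ M` for all its points, and contains a point `(m*, n*)` with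
`m* ∈ {-1, 0}`, `m* + n* = M` and maximal second coordinate. -/
theorem stmt_13 (S : Finset (ℤ × ℤ)) (hS : S.Nonempty) (a b : ℤ × ℤ → ℝ)
    (ha : ∀ m n : ℤ, m < -1 ∨ n ≤ -1 → a (m, n) = 0)
    (hb : ∀ m n : ℤ, m ≤ -1 ∨ n < -1 → b (m, n) = 0)
    (hSsupp : ∀ p : ℤ × ℤ, p ∈ S ↔ (a p) ^ 2 + (b p) ^ 2 ≠ 0)
    (M : ℤ) (hM : M = S.sup' hS (fun p => p.1 + p.2))
    (P Q : ℝ → ℝ → ℝ)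
    (hP : ∀ x y : ℝ, P x y = ∑ p ∈ S, a p * x ^ (p.1 + 1) * y ^ p.2)
    (hQ : ∀ x y : ℝ, Q x y = ∑ p ∈ S, b p * x ^ p.1 * y ^ (p.2 + 1)) :
    {lam : ℝ | ¬ ∀ (S' : Finset (ℤ × ℤ)) (a' b' : ℤ × ℤ → ℝ),
      (∀ m n : ℤ, m < -1 ∨ n ≤ -1 → a' (m, n) = 0) →
      (∀ m n : ℤ, m ≤ -1 ∨ n < -1 → b' (m, n) = 0) →
      (∀ p : ℤ × ℤ, p ∈ S' ↔ (a' p) ^ 2 + (b' p) ^ 2 ≠ 0) →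
      (∀ x y : ℝ, P (x + lam * y) y - lam * Q (x + lam * y) y =
        ∑ p ∈ S', a' p * x ^ (p.1 + 1) * y ^ p.2) →
      (∀ x y : ℝ, Q (x + lam * y) y = ∑ p ∈ S', b' p * x ^ p.1 * y ^ (p.2 + 1)) →
      ((∀ p ∈ S', p.1 + p.2 ≤ M) ∧
        ∃ p' ∈ S', (p'.1 = -1 ∨ p'.1 = 0) ∧ p'.1 + p'.2 = M ∧
          ∀ p ∈ S', p.2 ≤ p'.2)}.Finite := by
  simpa only [isLogVectorField_iff_sq, and_imp] using
    stmt_13_general hS (isLogVectorField_iff_sq.mpr ⟨ha, hb, hSsupp⟩) hM hP hQ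
end
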